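/- arXiv:1506.02174 — 3 statements merged into one kernel-verified Lean document; each statement's English description precedes it below -/
import Mathlib

section
/- Assume ε(𝒵_τ) ≥ ℓ(𝒵_τ) + log|𝒵_τ| for all τ ∈ 𝒯 and that W is sub-Gaussian with parameter ρ. Fix τ* ∈ 𝒯, Z* ∈ 𝒵_{τ*} and Q* ∈ ℝ^{ℓ(𝒵_{τ*})}, and for constants C₁ > 1 and C₂ > 0 set ε*(𝒵_τ) = C₁ε(𝒵_τ) + C₂‖𝒳_{Z*}(Q*) − θ*‖² and ε*(𝒵_{τ*}) = C₁ε(𝒵_{τ*}) + C₂‖𝒳_{Z*}(Q*) − θ*‖². For Z ∈ 𝒵_τ define the events E_Z = {|⟨W, 𝒳_Z(Q) − 𝒳_{Z*}(Q*)⟩| ≤ √(ε*(𝒵_τ)) · ‖𝒳_Z(Q) − 𝒳_{Z*}(Q*)‖ for all Q ∈ ℝ^{ℓ(𝒵_τ)}} and F_Z = {|⟨W, 𝒳_Z(Q) − 𝒳_{Z*}(Q*)⟩| ≤ √(ε*(𝒵_{τ*})) · ‖𝒳_Z(Q) − 𝒳_{Z*}(Q*)‖ for all Q ∈ ℝ^{ℓ(𝒵_τ)}}.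 Then P(E_Z^c) ≤ 2 exp(−(ρC₁/16 − 5)ε(𝒵_τ) − ρC₂‖𝒳_{Z*}(Q*) − θ*‖²/16) and P(F_Z^c) ≤ 2 exp(5ℓ(𝒵_τ) − ρC₁ε(𝒵_{τ*})/16 − ρC₂‖𝒳_{Z*}(Q*) − θ*‖²/16). -/
open MeasureTheory Real Matrix
open scoped ENNReal Classical

/-- Euclidean norm of a finitely-indexed real vector. -/
noncomputable def enr {ι : Type*} [Fintype ι] (v : ι → ℝ) : ℝ :=
  Real.sqrt (∑ i, v i ^ 2)

/-- Euclidean inner product. -/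
noncomputable def ipr {ι : Type*} [Fintype ι] (u v : ι → ℝ) : ℝ :=
  ∑ i, u i * v i

/-- Sub-Gaussian condition: `P(|⟨W,K⟩| > t) ≤ exp(-ρt²/2)` for every unit vector `K`. -/
def subG {ι Ω : Type*} [Fintype ι] [MeasurableSpace Ω] (P : Measure Ω) (ρ : ℝ)
    (W : Ω → ι → ℝ) : Prop :=
  ∀ K : ι → ℝ, enr K = 1 → ∀ t : ℝ, 0 < t →
    P {ω | t < |ipr (W ω) K|} ≤ ENNReal.ofReal (Real.exp (-ρ * t ^ 2 / 2))

theorem aux_net {E : Type*} [NormedAddCommGroup E] [NormedSpace ℝ E] [FiniteDimensional ℝ E] :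
    ∃ S : Finset E, (∀ c ∈ S, ‖c‖ = 2) ∧ S.card ≤ 5 ^ Module.finrank ℝ E ∧
      ∀ x : E, ‖x‖ = 2 → ∃ c ∈ S, ‖x - c‖ ≤ 1 := by
  let p : ℕ → Prop := fun n => ∃ S : Finset E, S.card = n ∧ (∀ c ∈ S, ‖c‖ = 2) ∧
    (∀ c ∈ S, ∀ d ∈ S, c ≠ d → 1 ≤ ‖c - d‖)
  have hb : ∀ S : Finset E, (∀ c ∈ S, ‖c‖ = 2) →
      (∀ c ∈ S, ∀ d ∈ S, c ≠ d → 1 ≤ ‖c - d‖) → S.card ≤ 5 ^ Module.finrank ℝ E :=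
    fun S h1 h2 => Besicovitch.card_le_of_separated S (fun c hc => (h1 c hc).le) h2
  have h0 : p 0 := ⟨∅, by simp⟩
  obtain ⟨S, hS, h1, h2⟩ : p (Nat.findGreatest p (5 ^ Module.finrank ℝ E)) :=
    Nat.findGreatest_spec (Nat.zero_le _) h0
  refine ⟨S, h1, hb S h1 h2, ?_⟩
  intro x hx
  by_contra! hcon
  have hxS : x ∉ S := fun h => by
    have := hcon x h
    simp at this
    linarith
  have h1' : ∀ c ∈ insert x S, ‖c‖ = 2 := by
    intro c hc
    rcases Finset.mem_insert.1 hc with rfl | h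
    · exact hx
    · exact h1 c h
  have h2' : ∀ c ∈ insert x S, ∀ d ∈ insert x S, c ≠ d → 1 ≤ ‖c - d‖ := by
    intro c hc d hd hcd
    rcases Finset.mem_insert.1 hc with rfl | h <;> rcases Finset.mem_insert.1 hd with rfl | h'
    · exact absurd rfl hcd
    · exact (hcon d h').le
    · rw [norm_sub_rev]; exact (hcon c h).le
    · exact h2 c h d h' hcd
  have hle := hb _ h1' h2'
  have := Nat.le_findGreatest (P := p) hle ⟨_, rfl, h1', h2'⟩
  rw [Finset.card_insert_of_notMem hxS, hS] at this
  omega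

theorem aux_op {E : Type*} [NormedAddCommGroup E] [NormedSpace ℝ E]
    (S : Finset E) (hS : ∀ x : E, ‖x‖ = 2 → ∃ c ∈ S, ‖x - c‖ ≤ 1) (L : E →L[ℝ] ℝ) (m : ℝ)
    (hm : 0 ≤ m) (hL : ∀ c ∈ S, |L c| ≤ m) : ‖L‖ ≤ m := by
  have : ‖L‖ ≤ (m + ‖L‖) / 2 := by
    refine L.opNorm_le_bound (by positivity) fun x => ?_
    by_cases hx : x = 0
    · simp [hx]
    have hx' : 0 < ‖x‖ := norm_pos_iff.2 hx
    obtain ⟨c, hc, hxc⟩ := hS ((2 / ‖x‖) • x) (by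
      rw [norm_smul, Real.norm_of_nonneg (by positivity)]; field_simp)
    have h1 : L ((2 / ‖x‖) • x) = L c + L ((2 / ‖x‖) • x - c) := by rw [← map_add]; simp
    have h2 : |L ((2 / ‖x‖) • x)| ≤ m + ‖L‖ := by
      rw [h1]
      refine (abs_add_le _ _).trans (add_le_add (hL c hc) ?_)
      exact (L.le_opNorm _).trans (mul_le_of_le_one_right (norm_nonneg _) hxc)
    rw [map_smul, smul_eq_mul, abs_mul, abs_of_nonneg (by positivity : 0 ≤ 2 / ‖x‖)] at h2
    rw [Real.norm_eq_abs]
    have h3 : |L x| = (2 / ‖x‖ * |L x|) * (‖x‖ / 2) := by field_simp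
    rw [h3]
    nlinarith
  linarith

theorem aux_main {E Ω : Type*} [NormedAddCommGroup E] [InnerProductSpace ℝ E]
    [FiniteDimensional ℝ E] [MeasurableSpace Ω] (P : Measure Ω)
    (ρ : ℝ) (hρ : 0 < ρ) (W : Ω → E)
    (hW : ∀ K : E, ‖K‖ = 1 → ∀ t : ℝ, 0 < t →
      P {ω | t < |inner ℝ (W ω) K|} ≤ ENNReal.ofReal (Real.exp (-ρ * t ^ 2 / 2)))
    (U : Submodule ℝ E) (b : E) (s : ℝ) (hs : 0 < s) (d : ℕ) (hd : Module.finrank ℝ U ≤ d) :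
    P {ω | ¬ ∀ u ∈ U, |inner ℝ (W ω) (u - b)| ≤ s * ‖u - b‖} ≤
      ENNReal.ofReal (2 * Real.exp (5 * (d : ℝ) - ρ * s ^ 2 / 16)) := by
  have hW' : ∀ K : E, ∀ t : ℝ, 0 < t →
      P {ω | t * ‖K‖ < |inner ℝ (W ω) K|} ≤ ENNReal.ofReal (Real.exp (-ρ * t ^ 2 / 2)) := by
    intro K t ht
    by_cases hK : K = 0
    · simp [hK]
    have hK' : 0 < ‖K‖ := norm_pos_iff.2 hK
    refine le_trans (measure_mono ?_) (hW (‖K‖⁻¹ • K) (norm_smul_inv_norm hK) t ht)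
    intro ω hω
    simp only [Set.mem_ofPred_eq] at hω ⊢
    rw [inner_smul_right, abs_mul, abs_of_pos (inv_pos.2 hK'), inv_mul_eq_div, lt_div_iff₀ hK']
    exact hω
  obtain ⟨S, hS2, hScard, hSnet⟩ := aux_net (E := U)
  set w : E := b - U.starProjection b with hw
  have hwU : w ∈ Uᗮ := U.sub_starProjection_mem_orthogonal b
  have h2 : (0:ℝ) < √2 := by positivity
  have h22 : √2 ^ 2 = (2:ℝ) := Real.sq_sqrt (by norm_num)
  set a : ℝ := s / √2 with ha
  have hapos : 0 < a := by positivity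
  have ha2 : a ^ 2 = s ^ 2 / 2 := by rw [ha, div_pow, h22]
  have hsub : {ω | ¬ ∀ u ∈ U, |inner ℝ (W ω) (u - b)| ≤ s * ‖u - b‖} ⊆
      {ω | a * ‖w‖ < |inner ℝ (W ω) w|} ∪
        ⋃ c ∈ S, {ω | a / 2 * ‖(c : E)‖ < |inner ℝ (W ω) (c : E)|} := by
    intro ω hω
    by_contra hcon
    apply hω
    simp only [Set.mem_union, Set.mem_iUnion, Set.mem_ofPred_eq, not_or, not_exists, not_lt] at hcon
    obtain ⟨hc1, hc2⟩ := hcon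
    have hop := aux_op S hSnet ((innerSL ℝ (W ω)).comp U.subtypeL) a hapos.le (by
      intro c hc
      have h := hc2 c hc
      have h' : ‖(c : E)‖ = 2 := hS2 c hc
      rw [h'] at h
      simpa using h)
    intro u hu
    have hv : u - U.starProjection b ∈ U := U.sub_mem hu (U.starProjection_apply_mem b)
    have hvn : |inner ℝ (W ω) (u - U.starProjection b)| ≤ a * ‖u - U.starProjection b‖ := by
      have := (((innerSL ℝ (W ω)).comp U.subtypeL).le_opNorm ⟨_, hv⟩).trans
        (mul_le_mul_of_nonneg_right hop (norm_nonneg _))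
      simpa using this
    set v : E := u - U.starProjection b with hvdef
    have hub : u - b = v - w := by rw [hvdef, hw]; abel
    have horth : inner ℝ v w = 0 := hwU v hv
    have hn : ‖v - w‖ ^ 2 = ‖v‖ ^ 2 + ‖w‖ ^ 2 := by
      rw [norm_sub_sq_real, horth]; ring
    rw [hub, inner_sub_right]
    have h3 : ‖v‖ + ‖w‖ ≤ √2 * ‖v - w‖ := by
      refine le_of_sq_le_sq ?_ (by positivity)
      rw [mul_pow, h22, hn]
      nlinarith [sq_nonneg (‖v‖ - ‖w‖)]
    calc _ ≤ |inner ℝ (W ω) v| + |inner ℝ (W ω) w| := abs_sub _ _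
      _ ≤ a * (‖v‖ + ‖w‖) := by rw [mul_add]; exact add_le_add hvn hc1
      _ ≤ a * (√2 * ‖v - w‖) := by gcongr
      _ = s * ‖v - w‖ := by rw [ha]; field_simp
  have hx : ∀ t : ℝ, ρ * s ^ 2 / 16 ≤ ρ * t ^ 2 / 2 → 
      ENNReal.ofReal (Real.exp (-ρ * t ^ 2 / 2)) ≤ ENNReal.ofReal (Real.exp (-(ρ * s ^ 2 / 16))) := by
    intro t ht
    apply ENNReal.ofReal_le_ofReal
    apply Real.exp_le_exp.2
    linarith
  have hps : 0 ≤ ρ * s ^ 2 := by positivity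
  have hb1 : P {ω | a * ‖w‖ < |inner ℝ (W ω) w|} ≤
      ENNReal.ofReal (Real.exp (-(ρ * s ^ 2 / 16))) :=
    (hW' w a hapos).trans (hx a (by rw [ha2]; linarith))
  have hb2 : P (⋃ c ∈ S, {ω | a / 2 * ‖(c : E)‖ < |inner ℝ (W ω) (c : E)|}) ≤
      ENNReal.ofReal (Real.exp (5 * (d : ℝ)) * Real.exp (-(ρ * s ^ 2 / 16))) := by
    refine (measure_biUnion_finset_le _ _).trans ?_
    have hc : ∀ c ∈ S, P {ω | a / 2 * ‖(c : E)‖ < |inner ℝ (W ω) (c : E)|} ≤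
        ENNReal.ofReal (Real.exp (-(ρ * s ^ 2 / 16))) := by
      intro c _
      have h4 : ρ * s ^ 2 / 16 ≤ ρ * (a / 2) ^ 2 / 2 := by rw [div_pow, ha2]; linarith
      exact (hW' (c : E) (a / 2) (by positivity)).trans (hx (a / 2) h4)
    refine (Finset.sum_le_sum hc).trans ?_
    rw [Finset.sum_const, nsmul_eq_mul, ← ENNReal.ofReal_natCast, ← ENNReal.ofReal_mul (by positivity)]
    apply ENNReal.ofReal_le_ofReal
    gcongr
    have h5 : (5 : ℝ) ≤ Real.exp 5 := by linarith [Real.add_one_le_exp (5 : ℝ)]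
    calc (S.card : ℝ) ≤ (5 : ℝ) ^ Module.finrank ℝ U := by exact_mod_cast hScard
      _ ≤ 5 ^ d := pow_le_pow_right₀ (by norm_num) hd
      _ ≤ Real.exp 5 ^ d := by gcongr
      _ = Real.exp (5 * d) := by rw [← Real.exp_nat_mul, mul_comm]
  refine (measure_mono hsub).trans ((measure_union_le _ _).trans ((add_le_add hb1 hb2).trans ?_))
  rw [← ENNReal.ofReal_add (by positivity) (by positivity)]
  apply ENNReal.ofReal_le_ofReal
  rw [sub_eq_add_neg, Real.exp_add]
  have h1 : 1 ≤ Real.exp (5 * (d : ℝ)) := Real.one_le_exp (by positivity)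
  nlinarith [Real.exp_pos (-(ρ * s ^ 2 / 16))]

theorem aux_enr {N : ℕ} (v : Fin N → ℝ) : enr v = ‖WithLp.toLp 2 v‖ := by
  simp [enr, EuclideanSpace.norm_eq]

theorem aux_ipr {N : ℕ} (u v : Fin N → ℝ) :
    ipr u v = inner ℝ (WithLp.toLp 2 u) (WithLp.toLp 2 v) := by
  simp [ipr, PiLp.inner_apply, mul_comm]

theorem aux_mat {N d : ℕ} {Ω : Type*} [MeasurableSpace Ω] (P : Measure Ω) [IsProbabilityMeasure P]
    (ρ : ℝ) (hρ : 0 < ρ) (W : Ω → Fin N → ℝ) (hW : subG P ρ W)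
    (X : Matrix (Fin N) (Fin d) ℝ) (b : Fin N → ℝ) (r : ℝ) (hr : 0 ≤ r) :
    P {ω | ¬ ∀ Q : Fin d → ℝ, |ipr (W ω) fun i => X.mulVec Q i - b i| ≤
        Real.sqrt r * enr fun i => X.mulVec Q i - b i} ≤
      ENNReal.ofReal (2 * Real.exp (5 * (d : ℝ) - ρ * r / 16)) := by
  rcases hr.eq_or_lt with rfl | hr
  · refine prob_le_one.trans ?_
    rw [ENNReal.one_le_ofReal]
    have h1 : 1 ≤ Real.exp (5 * (d : ℝ) - ρ * 0 / 16) := Real.one_le_exp (by simp)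
    linarith
  let f : (Fin d → ℝ) →ₗ[ℝ] EuclideanSpace ℝ (Fin N) :=
    (WithLp.linearEquiv 2 ℝ (Fin N → ℝ)).symm.toLinearMap ∘ₗ X.mulVecLin
  have hfr : Module.finrank ℝ (LinearMap.range f) ≤ d := by
    simpa using LinearMap.finrank_range_le f
  have key := aux_main P ρ hρ (fun ω => WithLp.toLp 2 (W ω)) (by
    intro K hK t ht
    have := hW K.ofLp (by rw [aux_enr]; exact hK) t ht
    simpa only [aux_ipr] using this) (LinearMap.range f) (WithLp.toLp 2 b) (√r)
    (Real.sqrt_pos.2 hr) d hfr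
  rw [Real.sq_sqrt hr.le] at key
  refine le_trans (measure_mono ?_) key
  intro ω hω h
  apply hω
  intro Q
  have := h (f Q) ⟨Q, rfl⟩
  rw [aux_ipr, aux_enr]
  exact this

/-- Lemma 1 (the events `E_Z` and `F_Z` hold with high probability).  Under the
complexity condition `ε(𝒵_τ) ≥ ℓ(𝒵_τ) + log |𝒵_τ|` and the sub-Gaussian condition on `W`,
the complements of the events `E_Z` and `F_Z` have exponentially small probability. -/
theorem noise_lemma
    (N : ℕ) {T : Type*} [Fintype T] {Zty : T → Type*} [∀ τ, Fintype (Zty τ)]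
    [∀ τ, Nonempty (Zty τ)]
    (ℓ : T → ℕ) (X : (τ : T) → Zty τ → Matrix (Fin N) (Fin (ℓ τ)) ℝ)
    (ε : T → ℝ)
    (hε : ∀ τ, (ℓ τ : ℝ) + Real.log (Fintype.card (Zty τ)) ≤ ε τ)
    {Ω : Type*} [MeasurableSpace Ω] (P : Measure Ω) [IsProbabilityMeasure P]
    (ρ : ℝ) (hρ : 0 < ρ) (W : Ω → Fin N → ℝ) (hW : subG P ρ W)
    (θs : Fin N → ℝ) (τs : T) (Zs : Zty τs) (Qs : Fin (ℓ τs) → ℝ)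
    (C₁ C₂ : ℝ) (hC₁ : 1 < C₁) (hC₂ : 0 < C₂)
    (τ : T) (Z : Zty τ) :
    P {ω | ¬ ∀ Q : Fin (ℓ τ) → ℝ,
        |ipr (W ω) fun i => (X τ Z).mulVec Q i - (X τs Zs).mulVec Qs i| ≤
          Real.sqrt (C₁ * ε τ + C₂ * (enr fun i => (X τs Zs).mulVec Qs i - θs i) ^ 2) *
            enr fun i => (X τ Z).mulVec Q i - (X τs Zs).mulVec Qs i}
      ≤ ENNReal.ofReal (2 * Real.exp (-(ρ * C₁ / 16 - 5) * ε τ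
          - ρ * C₂ * (enr fun i => (X τs Zs).mulVec Qs i - θs i) ^ 2 / 16)) ∧
    P {ω | ¬ ∀ Q : Fin (ℓ τ) → ℝ,
        |ipr (W ω) fun i => (X τ Z).mulVec Q i - (X τs Zs).mulVec Qs i| ≤
          Real.sqrt (C₁ * ε τs + C₂ * (enr fun i => (X τs Zs).mulVec Qs i - θs i) ^ 2) *
            enr fun i => (X τ Z).mulVec Q i - (X τs Zs).mulVec Qs i}
      ≤ ENNReal.ofReal (2 * Real.exp (5 * (ℓ τ : ℝ) - ρ * C₁ * ε τs / 16
          - ρ * C₂ * (enr fun i => (X τs Zs).mulVec Qs i - θs i) ^ 2 / 16)) := by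
  have hε0 : ∀ τ, (ℓ τ : ℝ) ≤ ε τ := fun τ => by
    have := hε τ
    have h : 0 ≤ Real.log (Fintype.card (Zty τ)) :=
      Real.log_nonneg (by exact_mod_cast Fintype.card_pos)
    linarith
  have hεn : ∀ τ, 0 ≤ ε τ := fun τ => (Nat.cast_nonneg _).trans (hε0 τ)
  have hr : ∀ τ', 0 ≤ C₁ * ε τ' + C₂ * (enr fun i => (X τs Zs).mulVec Qs i - θs i) ^ 2 := by
    intro τ'
    have := hεn τ'
    positivity
  constructor
  · refine (aux_mat P ρ hρ W hW (X τ Z) ((X τs Zs).mulVec Qs) _ (hr τ)).trans ?_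
    apply ENNReal.ofReal_le_ofReal
    have := hε0 τ
    gcongr 2 * Real.exp ?_
    linarith
  · refine (aux_mat P ρ hρ W hW (X τ Z) ((X τs Zs).mulVec Qs) _ (hr τs)).trans ?_
    apply ENNReal.ofReal_le_ofReal
    gcongr 2 * Real.exp ?_
    linarith
end

section
/- (Theorem 1, model-complexity bound.) Assume ε(𝒵_τ) ≥ ℓ(𝒵_τ) + log|𝒵_τ| for all τ ∈ 𝒯, the counting condition |{τ : t−1 < ε(𝒵_τ) ≤ t}| ≤ t for all t ∈ ℕ, and that W = Y − θ* is sub-Gaussian with parameter ρ. Then for any θ* ∈ ℝ^N, any τ* ∈ 𝒯, any Z* ∈ 𝒵̄_{τ*}, any Q* ∈ ℝ^{ℓ(𝒵_{τ*})}, any constants λ, ρ > 0 and any sufficiently small constant δ ∈ (0,1), there exists a constant D_{λ,δ,ρ} > 0 depending only on λ, δ, ρ such that for every D > D_{λ,δ,ρ} there is a constant C' > 0 depending only on λ, δ, ρ, D with E Π( ε(𝒵_τ) > (1+δ)ε(𝒵_{τ*}) + δ‖𝒳_{Z*}(Q*) − θ*‖² | Y ) ≤ exp(−C'(ε(𝒵_{τ*})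 + ‖𝒳_{Z*}(Q*) − θ*‖²)), where the expectation is over the distribution of W. -/
open MeasureTheory Real Matrix
open scoped ENNReal Classical

/-- Determinant of the Gram matrix `AᵀA`. -/
noncomputable def gramDet {N κ : Type*} [Fintype N] [Fintype κ] [DecidableEq κ]
    (A : Matrix N κ ℝ) : ℝ := (Aᵀ * A).det

/-- Generic posterior probability for a structured linear model.
`ι` indexes the models (structures), `κ i` the coordinates of the parameter of model `i`,
`A i` is the matrix of the linear operator `𝒳` of model `i`, `w i` the model-selection prior
weight (with the Gamma-correction already cancelled against the Laplace normalizing constant),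
`emb i` maps a parameter to the object the posterior statement is about, `Y` is the data,
`Sel` restricts the model index and `U` the embedded parameter. -/
noncomputable def gpostP {Θ N ι : Type*} [Fintype N] [Fintype ι]
    {κ : ι → Type*} [∀ i, Fintype (κ i)] [∀ i, DecidableEq (κ i)]
    (w : ι → ℝ) (A : (i : ι) → Matrix N (κ i) ℝ)
    (emb : (i : ι) → (κ i → ℝ) → Θ) (lam : ℝ) (Y : N → ℝ)
    (Sel : Set ι) (U : Set Θ) : ℝ :=
  (∑ i : ι, (if i ∈ Sel then w i else 0) * Real.sqrt (gramDet (A i)) *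
      (lam / Real.sqrt π) ^ Fintype.card (κ i) *
      ∫ Q in {Q : κ i → ℝ | emb i Q ∈ U},
        Real.exp (-(1/2) * (enr fun t => Y t - (A i).mulVec Q t) ^ 2
          - lam * enr ((A i).mulVec Q))) /
  (∑ i : ι, w i * Real.sqrt (gramDet (A i)) *
      (lam / Real.sqrt π) ^ Fintype.card (κ i) *
      ∫ Q : κ i → ℝ,
        Real.exp (-(1/2) * (enr fun t => Y t - (A i).mulVec Q t) ^ 2
          - lam * enr ((A i).mulVec Q)))

/-- The posterior distribution of the two-step model-selection prior in the structured
linear model: `A` restricts the structure index `τ` and `U` restricts the signal `𝒳_Z(Q)`.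
The model index is a pair `(τ, Z)` with `Z ∈ 𝒵̄_τ = {Z : det(𝒳_Zᵀ𝒳_Z) > 0}`; the prior
weight of `τ` is `exp(-D ε(𝒵_τ))` (after cancelling the Gamma-correction factor against
the normalizing constant of the elliptical Laplace distribution) and `Z` is uniform on
`𝒵̄_τ`. -/
noncomputable def framePost (N : ℕ) {T : Type*} [Fintype T] {Zty : T → Type*}
    [∀ τ, Fintype (Zty τ)] (ℓ : T → ℕ)
    (X : (τ : T) → Zty τ → Matrix (Fin N) (Fin (ℓ τ)) ℝ) (ε : T → ℝ) (D lam : ℝ)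
    (Y : Fin N → ℝ) (A : Set T) (U : Set (Fin N → ℝ)) : ℝ :=
  gpostP
    (fun i : Σ τ : T, Zty τ =>
      (if 0 < gramDet (X i.1 i.2) then 1 else 0) * Real.exp (-D * ε i.1) *
        ((Finset.univ.filter fun Z : Zty i.1 => 0 < gramDet (X i.1 Z)).card : ℝ)⁻¹)
    (fun i => X i.1 i.2) (fun i Q => (X i.1 i.2).mulVec Q) lam Y
    {i | i.1 ∈ A} U

section helpers

lemma enr_sq {ι : Type*} [Fintype ι] (v : ι → ℝ) : enr v ^ 2 = ∑ i, v i ^ 2 := by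
  unfold enr
  exact Real.sq_sqrt (Finset.sum_nonneg fun i _ => sq_nonneg _)

lemma enr_eq_norm {ι : Type*} [Fintype ι] (v : ι → ℝ) : enr v = ‖WithLp.toLp 2 v‖ := by
  unfold enr
  rw [EuclideanSpace.norm_eq]
  simp

lemma ipr_eq_inner {ι : Type*} [Fintype ι] (u v : ι → ℝ) :
    ipr u v = inner ℝ (WithLp.toLp 2 u) (WithLp.toLp 2 v) := by
  unfold ipr
  simp [PiLp.inner_apply, mul_comm]

lemma enr_sq_dot {ι : Type*} [Fintype ι] (v : ι → ℝ) : enr v ^ 2 = v ⬝ᵥ v := by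
  rw [enr_sq]; simp [dotProduct, sq]

lemma enr_mulVec_sq {N κ : Type*} [Fintype N] [Fintype κ] (A : Matrix N κ ℝ) (Q : κ → ℝ) :
    enr (A.mulVec Q) ^ 2 = Q ⬝ᵥ ((Aᵀ * A).mulVec Q) := by
  rw [enr_sq_dot, ← Matrix.mulVec_mulVec, Matrix.dotProduct_mulVec Q, Matrix.vecMul_transpose]

lemma exists_sq_root {N : Type*} [Fintype N] {l : ℕ} (A : Matrix N (Fin l) ℝ) :
    ∃ B : Matrix (Fin l) (Fin l) ℝ, Aᵀ * A = Bᵀ * B := by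
  have h : (Aᵀ * A).PosSemidef := by
    have := Matrix.posSemidef_conjTranspose_mul_self A
    rwa [Matrix.conjTranspose_eq_transpose_of_trivial] at this
  open scoped MatrixOrder Matrix.Norms.L2Operator in
  obtain ⟨y, hy⟩ := CStarAlgebra.nonneg_iff_eq_star_mul_self.mp h.nonneg
  refine ⟨y, ?_⟩
  rw [hy, Matrix.star_eq_conjTranspose, Matrix.conjTranspose_eq_transpose_of_trivial]

lemma cont_enr {ι : Type*} [Fintype ι] : Continuous (enr : (ι → ℝ) → ℝ) := by
  unfold enr; fun_prop

lemma gauss_pi {l : ℕ} (c : ℝ) :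
    ∫ x : Fin l → ℝ, Real.exp (-c * enr x ^ 2) = Real.sqrt (π / c) ^ l := by
  have h : ∀ x : Fin l → ℝ, Real.exp (-c * enr x ^ 2) = ∏ i, Real.exp (-c * (x i) ^ 2) := by
    intro x
    rw [enr_sq, ← Real.exp_sum, Finset.mul_sum]
  simp_rw [h]
  rw [integral_fintype_prod_volume_eq_pow (fun y : ℝ => Real.exp (-c * y ^ 2)),
    integral_gaussian]
  simp

lemma gauss_int {N : Type*} [Fintype N] {l : ℕ} (A : Matrix N (Fin l) ℝ) (hA : 0 < gramDet A)
    (c : ℝ) :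
    Real.sqrt (gramDet A) * ∫ Q : Fin l → ℝ, Real.exp (-c * enr (A.mulVec Q) ^ 2)
      = Real.sqrt (π / c) ^ l := by
  obtain ⟨B, hB⟩ := exists_sq_root A
  have hg : gramDet A = B.det ^ 2 := by
    unfold gramDet; rw [hB, Matrix.det_mul, Matrix.det_transpose, sq]
  have hB0 : B.det ≠ 0 := by
    intro h; rw [hg, h] at hA; simp at hA
  have h1 : ∀ Q : Fin l → ℝ, Real.exp (-c * enr (A.mulVec Q) ^ 2)
      = (fun x => Real.exp (-c * enr x ^ 2)) (Matrix.toLin' B Q) := by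
    intro Q
    simp only [Matrix.toLin'_apply]
    rw [enr_mulVec_sq, enr_mulVec_sq, hB]
  have hc : Continuous (fun x : Fin l → ℝ => Real.exp (-c * enr x ^ 2)) := by
    have := cont_enr (ι := Fin l); fun_prop
  simp_rw [h1]
  rw [← integral_map (μ := volume) (φ := Matrix.toLin' B)
    (LinearMap.continuous_of_finiteDimensional _).measurable.aemeasurable
    hc.aestronglyMeasurable, Real.map_matrix_volume_pi_eq_smul_volume_pi hB0,
    integral_smul_measure, gauss_pi, hg, Real.sqrt_sq_eq_abs, ENNReal.toReal_ofReal (abs_nonneg _),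
    abs_inv, smul_eq_mul, ← mul_assoc, mul_inv_cancel₀ (abs_ne_zero.mpr hB0), one_mul]

lemma gauss_integrable {N : Type*} [Fintype N] {l : ℕ} (A : Matrix N (Fin l) ℝ)
    (hA : 0 < gramDet A) {c : ℝ} (hc : 0 < c) :
    Integrable (fun Q : Fin l → ℝ => Real.exp (-c * enr (A.mulVec Q) ^ 2)) := by
  apply Integrable.of_integral_ne_zero
  intro h
  have := gauss_int A hA c
  rw [h, mul_zero] at this
  have h2 : 0 < Real.sqrt (π / c) ^ l := by positivity
  linarith

/-- integrand -/
noncomputable def jF {N : Type*} [Fintype N] {l : ℕ} (lam : ℝ) (Y : N → ℝ)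
    (A : Matrix N (Fin l) ℝ) (Q : Fin l → ℝ) : ℝ :=
  Real.exp (-(1/2) * (enr fun t => Y t - A.mulVec Q t) ^ 2 - lam * enr (A.mulVec Q))

noncomputable def jI {N : Type*} [Fintype N] {l : ℕ} (lam : ℝ) (Y : N → ℝ)
    (A : Matrix N (Fin l) ℝ) : ℝ :=
  Real.sqrt (gramDet A) * (lam / Real.sqrt π) ^ l * ∫ Q : Fin l → ℝ, jF lam Y A Q

lemma jI_nonneg {N : Type*} [Fintype N] {l : ℕ} {lam : ℝ} (hl : 0 < lam) (Y : N → ℝ)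
    (A : Matrix N (Fin l) ℝ) : 0 ≤ jI lam Y A := by
  unfold jI jF; positivity

lemma cont_jF {N : Type*} [Fintype N] {l : ℕ} (lam : ℝ) (Y : N → ℝ)
    (A : Matrix N (Fin l) ℝ) : Continuous (jF lam Y A) := by
  unfold jF
  have := cont_enr (ι := N)
  have h2 : Continuous fun Q : Fin l → ℝ => A.mulVec Q := by fun_prop
  have h3 : Continuous fun Q : Fin l → ℝ => (fun t => Y t - A.mulVec Q t) := by fun_prop
  fun_prop

lemma jF_le {N : Type*} [Fintype N] {l : ℕ} {lam : ℝ} (hl : 0 < lam) (Y : N → ℝ)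
    (A : Matrix N (Fin l) ℝ) (Q : Fin l → ℝ) :
    jF lam Y A Q ≤ Real.exp (1/2 * enr Y ^ 2) * Real.exp (-(1/4) * enr (A.mulVec Q) ^ 2) := by
  unfold jF
  rw [← Real.exp_add]
  apply Real.exp_le_exp.mpr
  have h1 : 0 ≤ lam * enr (A.mulVec Q) := mul_nonneg hl.le (Real.sqrt_nonneg _)
  have h2 : enr (A.mulVec Q) ^ 2 ≤ 2 * (enr fun t => Y t - A.mulVec Q t) ^ 2 + 2 * enr Y ^ 2 := by
    rw [enr_sq, enr_sq, enr_sq, Finset.mul_sum, Finset.mul_sum, ← Finset.sum_add_distrib]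
    apply Finset.sum_le_sum
    intro i _
    nlinarith [sq_nonneg (2 * Y i - A.mulVec Q i)]
  linarith

lemma jF_integrable {N : Type*} [Fintype N] {l : ℕ} {lam : ℝ} (hl : 0 < lam) (Y : N → ℝ)
    (A : Matrix N (Fin l) ℝ) (hA : 0 < gramDet A) : Integrable (jF lam Y A) := by
  refine Integrable.mono' ((gauss_integrable A hA (c := 1/4) (by norm_num)).const_mul
    (Real.exp (1/2 * enr Y ^ 2))) (cont_jF lam Y A).aestronglyMeasurable ?_
  refine Filter.Eventually.of_forall fun Q => ?_
  rw [Real.norm_of_nonneg (by unfold jF; positivity)]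
  exact jF_le hl Y A Q

lemma jI_zero {N : Type*} [Fintype N] {l : ℕ} (hl : l = 0) (lam : ℝ) (Y : N → ℝ)
    (A : Matrix N (Fin l) ℝ) : jI lam Y A = Real.exp (-(1/2) * enr Y ^ 2) := by
  subst hl
  have h : ∀ Q : Fin 0 → ℝ, jF lam Y A Q = Real.exp (-(1/2) * enr Y ^ 2) := by
    intro Q
    have h0 : A.mulVec Q = 0 := by
      ext i; simp [Matrix.mulVec, dotProduct]
    unfold jF
    rw [h0]
    have : enr (0 : N → ℝ) = 0 := by simp [enr]
    rw [this]; simp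
  unfold jI
  simp_rw [h]
  simp [gramDet, Measure.real, volume_pi]

lemma low_vec {E : Type*} [NormedAddCommGroup E] [InnerProductSpace ℝ E] (y v u : E) {lam : ℝ}
    (hl : 0 < lam) :
    -(1/2) * ‖y - v‖ ^ 2 - lam * ‖v‖ - lam ^ 2 / 2 + (-1 * ‖u‖ ^ 2) + inner ℝ (y - v) u
      ≤ -(1/2) * ‖y - (v + u)‖ ^ 2 - lam * ‖v + u‖ := by
  have h1 : ‖y - (v + u)‖ ^ 2 = ‖y - v‖ ^ 2 - 2 * inner ℝ (y - v) u + ‖u‖ ^ 2 := by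
    rw [← sub_sub]; exact norm_sub_sq_real _ _
  have h2 : lam * ‖v + u‖ ≤ lam * (‖v‖ + ‖u‖) :=
    mul_le_mul_of_nonneg_left (norm_add_le _ _) hl.le
  nlinarith [sq_nonneg (lam - ‖u‖)]

lemma jF_norm {N : Type*} [Fintype N] {l : ℕ} (lam : ℝ) (Y : N → ℝ)
    (A : Matrix N (Fin l) ℝ) (Q : Fin l → ℝ) :
    jF lam Y A Q = Real.exp (-(1/2) * ‖WithLp.toLp 2 Y - WithLp.toLp 2 (A.mulVec Q)‖ ^ 2
      - lam * ‖WithLp.toLp 2 (A.mulVec Q)‖) := by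
  unfold jF
  rw [enr_eq_norm, enr_eq_norm]
  rfl

lemma jF_low {N : Type*} [Fintype N] {l : ℕ} {lam : ℝ} (hl : 0 < lam) (Y : N → ℝ)
    (A : Matrix N (Fin l) ℝ) (Qs u : Fin l → ℝ) :
    2 * (jF lam Y A Qs * Real.exp (-(lam ^ 2 / 2))) * Real.exp (-1 * enr (A.mulVec u) ^ 2)
      ≤ jF lam Y A (Qs + u) + jF lam Y A (Qs - u) := by
  set y := WithLp.toLp 2 Y with hy
  set v := WithLp.toLp 2 (A.mulVec Qs) with hv
  set a := WithLp.toLp 2 (A.mulVec u) with ha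
  have e1 : WithLp.toLp 2 (A.mulVec (Qs + u)) = v + a := by
    rw [Matrix.mulVec_add]; rfl
  have e2 : WithLp.toLp 2 (A.mulVec (Qs - u)) = v + -a := by
    rw [Matrix.mulVec_sub, ← sub_eq_add_neg]; rfl
  rw [jF_norm, jF_norm, jF_norm, enr_eq_norm, e1, e2]
  have h1 := Real.exp_le_exp.mpr (low_vec y v a hl)
  have h2 := Real.exp_le_exp.mpr (low_vec y v (-a) hl)
  rw [norm_neg, inner_neg_right] at h2
  rw [Real.exp_add] at h1 h2
  refine le_trans ?_ (add_le_add h1 h2)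
  rw [← mul_add, mul_assoc, ← Real.exp_add, ← Real.exp_add, mul_comm (2:ℝ)]
  have h3 : (2:ℝ) ≤ Real.exp (inner ℝ (y - v) a) + Real.exp (-inner ℝ (y - v) a) := by
    have e1 := Real.add_one_le_exp (inner ℝ (y - v) a)
    have e2 := Real.add_one_le_exp (-inner ℝ (y - v) a)
    linarith
  refine le_trans (le_of_eq ?_) (mul_le_mul_of_nonneg_left h3 (Real.exp_pos _).le)
  congr 2

lemma jI_lower {N : Type*} [Fintype N] {l : ℕ} {lam : ℝ} (hl : 0 < lam) (Y : N → ℝ)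
    (A : Matrix N (Fin l) ℝ) (hA : 0 < gramDet A) (Qs : Fin l → ℝ) :
    jF lam Y A Qs * Real.exp (-(l / lam + lam ^ 2 / 2)) ≤ jI lam Y A := by
  have hi := jF_integrable hl Y A hA
  have hp : ∫ u, jF lam Y A (Qs + u) = ∫ Q, jF lam Y A Q :=
    integral_add_left_eq_self (μ := volume) (jF lam Y A) Qs
  have hm : ∫ u, jF lam Y A (Qs - u) = ∫ Q, jF lam Y A Q :=
    integral_sub_left_eq_self (jF lam Y A) volume Qs
  have hle : 2 * (jF lam Y A Qs * Real.exp (-(lam ^ 2 / 2))) *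
      ∫ u, Real.exp (-1 * enr (A.mulVec u) ^ 2) ≤ 2 * ∫ Q, jF lam Y A Q := by
    have : ∫ u, (2 * (jF lam Y A Qs * Real.exp (-(lam ^ 2 / 2))) *
      Real.exp (-1 * enr (A.mulVec u) ^ 2)) ≤ ∫ u, (jF lam Y A (Qs + u) + jF lam Y A (Qs - u)) :=
      integral_mono ((gauss_integrable A hA one_pos).const_mul _)
        ((hi.comp_add_left Qs).add (hi.comp_sub_left Qs)) (fun u => jF_low hl Y A Qs u)
    rw [integral_add (hi.comp_add_left Qs) (hi.comp_sub_left Qs), hp, hm,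
      integral_const_mul] at this
    linarith
  have hg := gauss_int A hA 1
  have hsq : 0 < Real.sqrt π := Real.sqrt_pos.mpr Real.pi_pos
  have hfac : 0 ≤ Real.sqrt (gramDet A) * (lam / Real.sqrt π) ^ l := by positivity
  have h1 := mul_le_mul_of_nonneg_left hle hfac
  have h2 : (lam / Real.sqrt π) ^ l * Real.sqrt (π / 1) ^ l = lam ^ l := by
    rw [← mul_pow, div_one, div_mul_cancel₀ _ hsq.ne']
  have h3 : lam ^ l * (jF lam Y A Qs * Real.exp (-(lam ^ 2 / 2))) ≤ jI lam Y A := by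
    unfold jI
    rw [← h2, ← hg]
    nlinarith
  refine le_trans ?_ h3
  have h4 : Real.exp (-(1 / lam)) ≤ lam := by
    rw [Real.exp_neg]
    have : 1 / lam ≤ Real.exp (1 / lam) := by linarith [Real.add_one_le_exp (1 / lam)]
    calc (Real.exp (1/lam))⁻¹ ≤ (1/lam)⁻¹ := inv_anti₀ (by positivity) this
      _ = lam := by simp
  have h5 : Real.exp (-(l / lam)) ≤ lam ^ l := by
    calc Real.exp (-(l / lam)) = Real.exp (-(1 / lam)) ^ l := by
          rw [← Real.exp_nat_mul]; congr 1; ring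
      _ ≤ lam ^ l := pow_le_pow_left₀ (Real.exp_pos _).le h4 l
  have hF : 0 ≤ jF lam Y A Qs := by unfold jF; positivity
  rw [neg_add, Real.exp_add]
  have h6 : 0 ≤ jF lam Y A Qs * Real.exp (-(lam ^ 2 / 2)) := by positivity
  have := mul_le_mul_of_nonneg_right h5 h6
  linarith

lemma up_vec {E : Type*} [NormedAddCommGroup E] [InnerProductSpace ℝ E] (θ w x v : E) {lam s : ℝ}
    (hl : 0 < lam) (h : inner ℝ w (x - v) ≤ s * ‖x - v‖) :
    -(1/2) * ‖θ + w - x‖ ^ 2 - lam * ‖x‖ ≤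
      (-(1/2) * ‖θ + w - v‖ ^ 2 - lam * ‖v‖) + (3 * s ^ 2 + 3 * ‖v - θ‖ ^ 2 + 3 * lam ^ 2)
        + (-(1/4) * ‖x - v‖ ^ 2) := by
  have e : θ + w - x = (θ + w - v) - (x - v) := by abel
  have h1 : ‖θ + w - x‖ ^ 2 = ‖θ + w - v‖ ^ 2 - 2 * inner ℝ (θ + w - v) (x - v) + ‖x - v‖ ^ 2 := by
    rw [e]; exact norm_sub_sq_real _ _
  have h2 : inner ℝ (θ + w - v) (x - v) = inner ℝ w (x - v) - inner ℝ (v - θ) (x - v) := by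
    rw [← inner_sub_left]; congr 1; abel
  have h3 : -(inner ℝ (v - θ) (x - v)) ≤ ‖v - θ‖ * ‖x - v‖ :=
    (neg_le_abs _).trans (abs_real_inner_le_norm _ _)
  have h4 : lam * ‖v‖ ≤ lam * (‖x‖ + ‖x - v‖) := by
    apply mul_le_mul_of_nonneg_left _ hl.le
    have := norm_sub_le x (x - v)
    simpa using this
  have h5 : (s + ‖v - θ‖ + lam) * ‖x - v‖ ≤ (s + ‖v - θ‖ + lam) ^ 2 + 1/4 * ‖x - v‖ ^ 2 := by
    nlinarith [sq_nonneg ((s + ‖v - θ‖ + lam) - 1/2 * ‖x - v‖)]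
  have h6 : (s + ‖v - θ‖ + lam) ^ 2 ≤ 3 * s ^ 2 + 3 * ‖v - θ‖ ^ 2 + 3 * lam ^ 2 := by
    nlinarith [sq_nonneg (s - ‖v - θ‖), sq_nonneg (s - lam), sq_nonneg (‖v - θ‖ - lam)]
  nlinarith

lemma exists_proj {N : Type*} [Fintype N] {l : ℕ} (A : Matrix N (Fin l) ℝ)
    (hA : 0 < gramDet A) (v : N → ℝ) :
    ∃ q : Fin l → ℝ, ∀ Q : Fin l → ℝ,
      enr (A.mulVec (Q - q)) ^ 2 ≤ enr (fun t => A.mulVec Q t - v t) ^ 2 := by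
  have hu : IsUnit (Aᵀ * A).det := by
    unfold gramDet at hA; exact isUnit_iff_ne_zero.mpr hA.ne'
  refine ⟨(Aᵀ * A)⁻¹.mulVec (Aᵀ.mulVec v), fun Q => ?_⟩
  set q := (Aᵀ * A)⁻¹.mulVec (Aᵀ.mulVec v) with hq
  have hq2 : Aᵀ.mulVec (A.mulVec q - v) = 0 := by
    rw [Matrix.mulVec_sub, Matrix.mulVec_mulVec, hq, Matrix.mulVec_mulVec,
      Matrix.mul_nonsing_inv _ hu, Matrix.one_mulVec, sub_self]
  have e : (fun t => A.mulVec Q t - v t) = A.mulVec (Q - q) + (A.mulVec q - v) := by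
    rw [Matrix.mulVec_sub]; ext t; simp
  have hcross : A.mulVec (Q - q) ⬝ᵥ (A.mulVec q - v) = 0 := by
    rw [← Matrix.vecMul_transpose, ← Matrix.dotProduct_mulVec, hq2, dotProduct_zero]
  rw [e, enr_sq_dot, enr_sq_dot, add_dotProduct, dotProduct_add, dotProduct_add,
    dotProduct_comm (A.mulVec q - v) (A.mulVec (Q - q)), hcross]
  have := enr_sq_dot (A.mulVec q - v)
  nlinarith [sq_nonneg (enr (A.mulVec q - v))]

lemma jI_upper {N : Type*} [Fintype N] {l : ℕ} {lam : ℝ} (hl : 0 < lam) (θ W v : N → ℝ)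
    (A : Matrix N (Fin l) ℝ) (hA : 0 < gramDet A) (s : ℝ)
    (h : ∀ Q : Fin l → ℝ, ipr W (fun t => A.mulVec Q t - v t)
      ≤ s * enr (fun t => A.mulVec Q t - v t)) :
    jI lam (fun i => θ i + W i) A ≤
      Real.exp (-(1/2) * (enr fun t => θ t + W t - v t) ^ 2 - lam * enr v) *
        Real.exp (2 * lam * l + 3 * s ^ 2 + 3 * (enr fun t => v t - θ t) ^ 2 + 3 * lam ^ 2) := by
  obtain ⟨q, hq⟩ := exists_proj A hA v
  set K := Real.exp ((-(1/2) * (enr fun t => θ t + W t - v t) ^ 2 - lam * enr v) +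
    (3 * s ^ 2 + 3 * (enr fun t => v t - θ t) ^ 2 + 3 * lam ^ 2)) with hK
  have hpt : ∀ Q, jF lam (fun i => θ i + W i) A Q ≤
      K * Real.exp (-(1/4) * enr (A.mulVec (Q - q)) ^ 2) := by
    intro Q
    have h1 := h Q
    rw [ipr_eq_inner, enr_eq_norm] at h1
    have h2 := up_vec (WithLp.toLp 2 θ) (WithLp.toLp 2 W) (WithLp.toLp 2 (A.mulVec Q))
      (WithLp.toLp 2 v) hl h1
    have h3 := hq Q
    rw [jF_norm, hK, ← Real.exp_add]
    apply Real.exp_le_exp.mpr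
    rw [enr_eq_norm (fun t => A.mulVec Q t - v t)] at h3
    rw [enr_eq_norm (fun t => θ t + W t - v t), enr_eq_norm v, enr_eq_norm (fun t => v t - θ t)]
    refine le_trans h2 ?_
    have h4 : ‖WithLp.toLp 2 (fun t => A.mulVec Q t - v t)‖ =
      ‖WithLp.toLp 2 (A.mulVec Q) - WithLp.toLp 2 v‖ := rfl
    rw [h4] at h3
    have h5 : ‖WithLp.toLp 2 (fun t => θ t + W t - v t)‖ =
      ‖WithLp.toLp 2 θ + WithLp.toLp 2 W - WithLp.toLp 2 v‖ := rfl
    have h6 : ‖WithLp.toLp 2 (fun t => v t - θ t)‖ =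
      ‖WithLp.toLp 2 v - WithLp.toLp 2 θ‖ := rfl
    rw [h5, h6]
    linarith
  have hgi := gauss_integrable A hA (c := 1/4) (by norm_num)
  have hint : ∫ Q, jF lam (fun i => θ i + W i) A Q ≤
      K * ∫ Q, Real.exp (-(1/4) * enr (A.mulVec Q) ^ 2) := by
    have h1 := integral_mono (jF_integrable hl (fun i => θ i + W i) A hA)
      ((hgi.comp_sub_right q).const_mul K) hpt
    rw [integral_const_mul, integral_sub_right_eq_self
      (fun Q => Real.exp (-(1/4) * enr (A.mulVec Q) ^ 2)) q] at h1
    exact h1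
  have hg := gauss_int A hA (1/4)
  have hsq : 0 < Real.sqrt π := Real.sqrt_pos.mpr Real.pi_pos
  have hfac : 0 ≤ Real.sqrt (gramDet A) * (lam / Real.sqrt π) ^ l := by positivity
  have h1 := mul_le_mul_of_nonneg_left hint hfac
  have h2 : (lam / Real.sqrt π) ^ l * Real.sqrt (π / (1/4)) ^ l = (2 * lam) ^ l := by
    have : Real.sqrt (π / (1/4)) = 2 * Real.sqrt π := by
      rw [show π / (1/4) = 2 ^ 2 * π by ring, Real.sqrt_mul (by norm_num),
        Real.sqrt_sq (by norm_num)]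
    rw [this, ← mul_pow]
    congr 1
    field_simp
  have h3 : jI lam (fun i => θ i + W i) A ≤ (2 * lam) ^ l * K := by
    unfold jI
    refine h1.trans (le_of_eq ?_)
    rw [← h2, ← hg]; ring
  have h4 : (2 * lam) ^ l ≤ Real.exp (2 * lam * l) := by
    rw [mul_comm (2 * lam) (l:ℝ), Real.exp_nat_mul]
    exact pow_le_pow_left₀ (by positivity) (by linarith [Real.add_one_le_exp (2 * lam)]) l
  refine h3.trans ((mul_le_mul_of_nonneg_right h4 (Real.exp_pos _).le).trans (le_of_eq ?_))
  rw [← Real.exp_add, ← Real.exp_add]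
  congr 1; ring

lemma exists_net {E : Type*} [NormedAddCommGroup E] [InnerProductSpace ℝ E]
    [FiniteDimensional ℝ E] :
    ∃ F : Finset E, F.card ≤ 5 ^ Module.finrank ℝ E ∧ (∀ c ∈ F, ‖c‖ = 1) ∧
      ∀ u : E, ‖u‖ = 1 → ∃ c ∈ F, ‖u - c‖ ≤ 1/2 := by
  let p : Finset E → Prop := fun s => (∀ c ∈ s, ‖c‖ = 2) ∧
    (∀ c ∈ s, ∀ d ∈ s, c ≠ d → 1 ≤ ‖c - d‖)
  let C : Set ℕ := {n | ∃ s, p s ∧ s.card = n}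
  have hb : BddAbove C := by
    refine ⟨5 ^ Module.finrank ℝ E, ?_⟩
    rintro n ⟨s, hs, rfl⟩
    exact Besicovitch.card_le_of_separated s (fun c hc => (hs.1 c hc).le) hs.2
  have hne : C.Nonempty := ⟨0, ∅, by simp [p], rfl⟩
  obtain ⟨s, hs, hcard⟩ := Nat.sSup_mem hne hb
  refine ⟨s.image (fun c => (1/2 : ℝ) • c), ?_, ?_, ?_⟩
  · exact Finset.card_image_le.trans
      (Besicovitch.card_le_of_separated s (fun c hc => (hs.1 c hc).le) hs.2)
  · intro c hc
    obtain ⟨d, hd, rfl⟩ := Finset.mem_image.mp hc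
    rw [norm_smul, hs.1 d hd]; norm_num
  · intro u hu
    by_contra hcon
    push Not at hcon
    have hfar : ∀ c ∈ s, 1 < ‖(2:ℝ) • u - c‖ := by
      intro c hc
      have h1 := hcon ((1/2 : ℝ) • c) (Finset.mem_image_of_mem _ hc)
      have : (2:ℝ) • u - c = (2:ℝ) • (u - (1/2 : ℝ) • c) := by
        rw [smul_sub, smul_smul]; norm_num
      rw [this, norm_smul]; norm_num; linarith
    have hnot : (2:ℝ) • u ∉ s := by
      intro hmem
      have := hfar _ hmem
      simp at this; linarith
    have hp : p (insert ((2:ℝ) • u) s) := by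
      constructor
      · intro c hc
        rcases Finset.mem_insert.mp hc with rfl | hc
        · rw [norm_smul, hu]; norm_num
        · exact hs.1 c hc
      · intro c hc d hd hcd
        rcases Finset.mem_insert.mp hc with rfl | hc <;> rcases Finset.mem_insert.mp hd with rfl | hd
        · exact absurd rfl hcd
        · exact (hfar d hd).le
        · rw [norm_sub_rev]; exact (hfar c hc).le
        · exact hs.2 c hc d hd hcd
    have h1 : (insert ((2:ℝ) • u) s).card ≤ sSup C := le_csSup hb ⟨_, hp, rfl⟩
    rw [Finset.card_insert_of_notMem hnot, hcard] at h1
    omega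

lemma net_vec {E : Type*} [NormedAddCommGroup E] [InnerProductSpace ℝ E]
    [FiniteDimensional ℝ E] (S : Submodule ℝ E) (F : Finset S)
    (hFn : ∀ u : S, ‖u‖ = 1 → ∃ c ∈ F, ‖u - c‖ ≤ 1/2) {s : ℝ} (hs : 0 < s) (w : E)
    (hcon2 : ∀ c ∈ F, |inner ℝ w (c : E)| ≤ s / 2) :
    ∀ u ∈ S, inner ℝ w u ≤ s * ‖u‖ := by
  set p : S := S.orthogonalProjectionOnto w with hp
  have hpin : ∀ u : S, inner ℝ w (u : E) = inner ℝ p u := by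
    intro u
    rw [hp, real_inner_comm, real_inner_comm u,
      Submodule.inner_orthogonalProjectionOnto_eq_of_mem_left]
  have hpn : ‖p‖ ≤ s := by
    by_cases h0 : p = 0
    · rw [h0, norm_zero]; exact hs.le
    have hpos : 0 < ‖p‖ := norm_pos_iff.mpr h0
    obtain ⟨c, hc, hcd⟩ := hFn ((‖p‖)⁻¹ • p) (by
      rw [norm_smul, norm_inv, norm_norm, inv_mul_cancel₀ hpos.ne'])
    have h1 : inner ℝ p ((‖p‖)⁻¹ • p) = ‖p‖ := by
      rw [real_inner_smul_right, real_inner_self_eq_norm_sq]; field_simp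
    have h2 : inner ℝ p ((‖p‖)⁻¹ • p) = inner ℝ p c + inner ℝ p ((‖p‖)⁻¹ • p - c) := by
      rw [← inner_add_right]; congr 1; abel
    have h3 : inner ℝ p c ≤ s / 2 := by
      rw [← hpin c]; exact (le_abs_self _).trans (hcon2 c hc)
    have h4 : inner ℝ p ((‖p‖)⁻¹ • p - c) ≤ ‖p‖ * (1/2) :=
      (real_inner_le_norm _ _).trans (mul_le_mul_of_nonneg_left hcd hpos.le)
    linarith
  intro u hu
  have h5 := hpin ⟨u, hu⟩
  simp only at h5
  rw [h5]
  exact (real_inner_le_norm _ _).trans (mul_le_mul_of_nonneg_right hpn (norm_nonneg _))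

lemma net_prob {N : ℕ} {Ω : Type*} [MeasurableSpace Ω] (P : Measure Ω) {ρ : ℝ}
    (W : Ω → Fin N → ℝ) (hW : subG P ρ W) {l : ℕ} (A : Matrix (Fin N) (Fin l) ℝ)
    (v : Fin N → ℝ) {s : ℝ} (hs : 0 < s) :
    P {ω | ¬ ∀ Q : Fin l → ℝ, ipr (W ω) (fun t => A.mulVec Q t - v t)
      ≤ s * enr (fun t => A.mulVec Q t - v t)} ≤
      ENNReal.ofReal (5 ^ (l + 1) * Real.exp (-ρ * s ^ 2 / 8)) := by
  let L : (Fin l → ℝ) →ₗ[ℝ] EuclideanSpace ℝ (Fin N) :=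
    (WithLp.linearEquiv 2 ℝ (Fin N → ℝ)).symm.toLinearMap ∘ₗ A.mulVecLin
  let S : Submodule ℝ (EuclideanSpace ℝ (Fin N)) := LinearMap.range L ⊔ Submodule.span ℝ {WithLp.toLp 2 v}
  have hS : Module.finrank ℝ S ≤ l + 1 := by
    refine (Submodule.finrank_add_le_finrank_add_finrank _ _).trans (add_le_add ?_ ?_)
    · exact (LinearMap.finrank_range_le L).trans (by simp)
    · exact (finrank_span_le_card _).trans (by simp)
  obtain ⟨F, hFc, hF1, hFn⟩ := exists_net (E := S)
  have hsub : {ω | ¬ ∀ Q : Fin l → ℝ, ipr (W ω) (fun t => A.mulVec Q t - v t)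
      ≤ s * enr (fun t => A.mulVec Q t - v t)} ⊆
      ⋃ c ∈ F, {ω | s / 2 < |ipr (W ω) (WithLp.ofLp (c : EuclideanSpace ℝ (Fin N)))|} := by
    intro ω hω
    by_contra hcon
    apply hω
    intro Q
    simp only [Set.mem_iUnion, not_exists, Set.mem_ofPred_eq, not_lt] at hcon
    set w := WithLp.toLp 2 (W ω) with hw
    have hcon2 : ∀ c ∈ F, |inner ℝ w (c : EuclideanSpace ℝ (Fin N))| ≤ s / 2 := by
      intro c hc
      have := hcon c hc
      rwa [ipr_eq_inner] at this
    have hmem : WithLp.toLp 2 (fun t => A.mulVec Q t - v t) ∈ S := by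
      have : WithLp.toLp 2 (fun t => A.mulVec Q t - v t) = L Q - WithLp.toLp 2 v := rfl
      rw [this]
      exact S.sub_mem (Submodule.mem_sup_left ⟨Q, rfl⟩)
        (Submodule.mem_sup_right (Submodule.mem_span_singleton_self _))
    rw [ipr_eq_inner, enr_eq_norm]
    exact net_vec S F hFn hs w hcon2 _ hmem
  refine (measure_mono hsub).trans ((measure_biUnion_finset_le _ _).trans ?_)
  have hE : ∀ c ∈ F, P {ω | s / 2 < |ipr (W ω) (WithLp.ofLp (c : EuclideanSpace ℝ (Fin N)))|} ≤
      ENNReal.ofReal (Real.exp (-ρ * s ^ 2 / 8)) := by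
    intro c hc
    have h1 := hW (WithLp.ofLp (c : EuclideanSpace ℝ (Fin N))) (by
      rw [enr_eq_norm]; exact hF1 c hc) (s / 2) (by positivity)
    rwa [show -ρ * (s / 2) ^ 2 / 2 = -ρ * s ^ 2 / 8 by ring] at h1
  refine (Finset.sum_le_sum hE).trans ?_
  rw [Finset.sum_const, nsmul_eq_mul, ENNReal.ofReal_mul (by positivity)]
  gcongr
  rw [← ENNReal.ofReal_natCast]
  apply ENNReal.ofReal_le_ofReal
  calc (F.card : ℝ) ≤ (5 ^ Module.finrank ℝ S : ℕ) := by exact_mod_cast hFc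
    _ ≤ 5 ^ (l + 1) := by push_cast; exact pow_le_pow_right₀ (by norm_num) hS

lemma geo_sum (n : ℕ) : ∑ t ∈ Finset.Icc 1 n, (1/17 : ℝ) ^ t = 1/16 * (1 - (1/17) ^ n) := by
  induction n with
  | zero => simp
  | succ k ih => rw [Finset.sum_Icc_succ_top (by omega), ih]; ring

lemma count_sum {T : Type} [Fintype T] (ε : T → ℝ)
    (hc : ∀ t : ℕ, 0 < t →
        (Finset.univ.filter fun τ => (t : ℝ) - 1 < ε τ ∧ ε τ ≤ (t : ℝ)).card ≤ t)
    (F : Finset T) (hF : ∀ τ ∈ F, 1/2 ≤ ε τ) :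
    ∑ τ ∈ F, Real.exp (-20 * ε τ) ≤ 1/16 := by
  have hexp4 : Real.exp (-4) ≤ 1/17 := by
    rw [Real.exp_neg, one_div]
    apply inv_anti₀ (by norm_num)
    have h1 : Real.exp 4 = Real.exp 1 ^ 4 := by rw [← Real.exp_nat_mul]; norm_num
    have h2 : (2.7 : ℝ) ≤ Real.exp 1 := by linarith [Real.exp_one_gt_d9]
    rw [h1]
    calc (17:ℝ) ≤ 2.7 ^ 4 := by norm_num
      _ ≤ _ := pow_le_pow_left₀ (by norm_num) h2 4
  have hceil : ∀ τ ∈ F, 1 ≤ ⌈ε τ⌉₊ := fun τ hτ => Nat.one_le_ceil_iff.mpr (by linarith [hF τ hτ])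
  calc ∑ τ ∈ F, Real.exp (-20 * ε τ) ≤ ∑ τ ∈ F, Real.exp (-5 * (⌈ε τ⌉₊ : ℝ)) := by
        apply Finset.sum_le_sum
        intro τ hτ
        apply Real.exp_le_exp.mpr
        have h1 := hF τ hτ
        have h2 := Nat.ceil_lt_add_one (show 0 ≤ ε τ by linarith)
        linarith
    _ = ∑ t ∈ Finset.Icc 1 (F.sup fun τ => ⌈ε τ⌉₊), ∑ τ ∈ F with ⌈ε τ⌉₊ = t,
          Real.exp (-5 * (⌈ε τ⌉₊ : ℝ)) := by
        rw [Finset.sum_fiberwise_of_maps_to]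
        intro τ hτ
        exact Finset.mem_Icc.mpr ⟨hceil τ hτ, Finset.le_sup (f := fun τ => ⌈ε τ⌉₊) hτ⟩
    _ ≤ ∑ t ∈ Finset.Icc 1 (F.sup fun τ => ⌈ε τ⌉₊), (1/17 : ℝ) ^ t := by
        apply Finset.sum_le_sum
        intro t ht
        have ht1 := (Finset.mem_Icc.mp ht).1
        have h1 : ∑ τ ∈ F with ⌈ε τ⌉₊ = t, Real.exp (-5 * (⌈ε τ⌉₊ : ℝ)) =
            (F.filter fun τ => ⌈ε τ⌉₊ = t).card * Real.exp (-5 * (t : ℝ)) := by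
          rw [← nsmul_eq_mul]
          apply Finset.sum_eq_card_nsmul
          intro τ hτ
          rw [(Finset.mem_filter.mp hτ).2]
        have h2 : (F.filter fun τ => ⌈ε τ⌉₊ = t).card ≤ t := by
          refine le_trans (Finset.card_le_card ?_) (hc t ht1)
          intro τ hτ
          obtain ⟨h3, h4⟩ := Finset.mem_filter.mp hτ
          have h5 := Nat.ceil_lt_add_one (show 0 ≤ ε τ by linarith [hF τ h3])
          have h6 := Nat.le_ceil (ε τ)
          rw [h4] at h5 h6
          exact Finset.mem_filter.mpr ⟨Finset.mem_univ _, by linarith, h6⟩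
        rw [h1]
        have h3 : ((F.filter fun τ => ⌈ε τ⌉₊ = t).card : ℝ) ≤ Real.exp t := by
          have : ((F.filter fun τ => ⌈ε τ⌉₊ = t).card : ℝ) ≤ t := by exact_mod_cast h2
          linarith [Real.add_one_le_exp (t : ℝ)]
        calc _ ≤ Real.exp t * Real.exp (-5 * (t : ℝ)) :=
              mul_le_mul_of_nonneg_right h3 (Real.exp_pos _).le
          _ = Real.exp (-4) ^ t := by
              rw [← Real.exp_add, ← Real.exp_nat_mul]; congr 1; ring
          _ ≤ _ := pow_le_pow_left₀ (Real.exp_pos _).le hexp4 t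
    _ ≤ 1/16 := by
        rw [geo_sum]
        have : (0:ℝ) ≤ (1/17) ^ (F.sup fun τ => ⌈ε τ⌉₊) := by positivity
        linarith

lemma sigma_sum {T : Type} [Fintype T] {Zty : T → Type} [∀ τ, Fintype (Zty τ)]
    [∀ τ, Nonempty (Zty τ)] (ε : T → ℝ) (big : T → Prop)
    (hlog : ∀ τ, Real.log (Fintype.card (Zty τ)) ≤ ε τ)
    (hc : ∀ t : ℕ, 0 < t →
        (Finset.univ.filter fun τ => (t : ℝ) - 1 < ε τ ∧ ε τ ≤ (t : ℝ)).card ≤ t)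
    (x : ℝ) (hb : ∀ τ, big τ → 1/2 ≤ ε τ ∧ x ≤ ε τ) :
    ∑ i : (Σ τ : T, Zty τ), (if big i.1 then Real.exp (-22 * ε i.1) else 0)
      ≤ Real.exp (-x) / 16 := by
  have hcard : ∀ τ, (Fintype.card (Zty τ) : ℝ) ≤ Real.exp (ε τ) := by
    intro τ
    have : (0:ℝ) < Fintype.card (Zty τ) := by exact_mod_cast Fintype.card_pos
    rw [← Real.exp_log this]
    exact Real.exp_le_exp.mpr (hlog τ)
  have hs := count_sum ε hc (Finset.univ.filter big)
    (fun τ hτ => (hb τ (Finset.mem_filter.mp hτ).2).1)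
  rw [Fintype.sum_sigma]
  calc ∑ τ, ∑ Z : Zty τ, (if big τ then Real.exp (-22 * ε τ) else 0)
      ≤ ∑ τ, Real.exp (-x) * (if big τ then Real.exp (-20 * ε τ) else 0) := by
        apply Finset.sum_le_sum
        intro τ _
        rw [Finset.sum_const, nsmul_eq_mul, Finset.card_univ]
        split_ifs with h
        · calc _ ≤ Real.exp (ε τ) * Real.exp (-22 * ε τ) :=
                mul_le_mul_of_nonneg_right (hcard τ) (Real.exp_pos _).le
            _ ≤ _ := by
                rw [← Real.exp_add, ← Real.exp_add]
                apply Real.exp_le_exp.mpr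
                linarith [(hb τ h).2]
        · simp
    _ = Real.exp (-x) * ∑ τ ∈ Finset.univ.filter big, Real.exp (-20 * ε τ) := by
        rw [← Finset.mul_sum, Finset.sum_filter]
    _ ≤ Real.exp (-x) * (1/16) := mul_le_mul_of_nonneg_left hs (Real.exp_pos _).le
    _ = _ := by ring

lemma int_bound {Ω : Type*} [MeasurableSpace Ω] (P : Measure Ω) [IsProbabilityMeasure P]
    (f : Ω → ℝ) (hf1 : ∀ ω, f ω ≤ 1) (Bad : Set Ω) {a c : ℝ} (ha : 0 ≤ a) (hc : 0 ≤ c)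
    (hB : P Bad ≤ ENNReal.ofReal a) (hg : ∀ ω, ω ∉ Bad → f ω ≤ c) :
    ∫ ω, f ω ∂P ≤ a + c := by
  by_cases hi : Integrable f P
  swap
  · rw [integral_undef hi]; positivity
  have hm := measurableSet_toMeasurable P Bad
  have hI : Integrable ((toMeasurable P Bad).indicator (fun _ => (1:ℝ))) P :=
    (integrable_const _).indicator hm
  calc ∫ ω, f ω ∂P ≤ ∫ ω, ((toMeasurable P Bad).indicator (fun _ => (1:ℝ)) ω + c) ∂P := by
        apply integral_mono hi (hI.add (integrable_const c))
        intro ω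
        simp only [Pi.add_apply]
        by_cases h : ω ∈ toMeasurable P Bad
        · rw [Set.indicator_of_mem h]; linarith [hf1 ω]
        · rw [Set.indicator_of_notMem h]
          have := hg ω (fun hh => h (subset_toMeasurable P Bad hh))
          linarith
    _ = P.real Bad + c := by
        rw [integral_add hI (integrable_const c), integral_indicator hm]
        simp [Measure.real]
    _ ≤ a + c := by
        have : P.real Bad ≤ a := ENNReal.toReal_le_of_le_ofReal ha hB
        linarith

/-- model weight -/
noncomputable def wt {N : ℕ} {T : Type} {Zty : T → Type}
    [∀ τ, Fintype (Zty τ)] {ℓ : T → ℕ}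
    (X : (τ : T) → Zty τ → Matrix (Fin N) (Fin (ℓ τ)) ℝ) (ε : T → ℝ) (D : ℝ)
    (i : Σ τ : T, Zty τ) : ℝ :=
  (if 0 < gramDet (X i.1 i.2) then 1 else 0) * Real.exp (-D * ε i.1) *
        ((Finset.univ.filter fun Z : Zty i.1 => 0 < gramDet (X i.1 Z)).card : ℝ)⁻¹

lemma framePost_eq {N : ℕ} {T : Type} [Fintype T] {Zty : T → Type}
    [∀ τ, Fintype (Zty τ)] {ℓ : T → ℕ}
    (X : (τ : T) → Zty τ → Matrix (Fin N) (Fin (ℓ τ)) ℝ) (ε : T → ℝ) (D lam : ℝ)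
    (Y : Fin N → ℝ) (A : Set T) :
    framePost N ℓ X ε D lam Y A Set.univ =
      (∑ i : Σ τ : T, Zty τ, if i.1 ∈ A then wt X ε D i * jI lam Y (X i.1 i.2) else 0) /
      (∑ i : Σ τ : T, Zty τ, wt X ε D i * jI lam Y (X i.1 i.2)) := by
  unfold framePost gpostP
  congr 1
  · apply Finset.sum_congr rfl
    intro i _
    have : {Q : Fin (ℓ i.1) → ℝ | (X i.1 i.2).mulVec Q ∈ (Set.univ : Set (Fin N → ℝ))}
      = Set.univ := by ext; simp
    rw [this, Measure.restrict_univ, Fintype.card_fin]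
    by_cases h : i.1 ∈ A
    · rw [if_pos h, if_pos (show i ∈ {i : Σ τ : T, Zty τ | i.1 ∈ A} from h)]
      unfold wt jI jF
      ring
    · rw [if_neg h, if_neg (show i ∉ {i : Σ τ : T, Zty τ | i.1 ∈ A} from h)]
      ring
  · apply Finset.sum_congr rfl
    intro i _
    rw [Fintype.card_fin]
    unfold wt jI jF
    ring

lemma wt_nonneg {N : ℕ} {T : Type} {Zty : T → Type}
    [∀ τ, Fintype (Zty τ)] {ℓ : T → ℕ}
    (X : (τ : T) → Zty τ → Matrix (Fin N) (Fin (ℓ τ)) ℝ) (ε : T → ℝ) (D : ℝ)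
    (i : Σ τ : T, Zty τ) : 0 ≤ wt X ε D i := by
  unfold wt
  have : (0:ℝ) ≤ if 0 < gramDet (X i.1 i.2) then 1 else 0 := by split_ifs <;> norm_num
  positivity

lemma card_pos_bar {N : ℕ} {T : Type} {Zty : T → Type}
    [∀ τ, Fintype (Zty τ)] {ℓ : T → ℕ}
    (X : (τ : T) → Zty τ → Matrix (Fin N) (Fin (ℓ τ)) ℝ) (i : Σ τ : T, Zty τ)
    (h : 0 < gramDet (X i.1 i.2)) :
    (1:ℝ) ≤ ((Finset.univ.filter fun Z : Zty i.1 => 0 < gramDet (X i.1 Z)).card : ℝ) := by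
  have : 1 ≤ (Finset.univ.filter fun Z : Zty i.1 => 0 < gramDet (X i.1 Z)).card :=
    Finset.card_pos.mpr ⟨i.2, by simp [h]⟩
  exact_mod_cast this

lemma wt_le {N : ℕ} {T : Type} {Zty : T → Type}
    [∀ τ, Fintype (Zty τ)] {ℓ : T → ℕ}
    (X : (τ : T) → Zty τ → Matrix (Fin N) (Fin (ℓ τ)) ℝ) (ε : T → ℝ) (D : ℝ)
    (i : Σ τ : T, Zty τ) (h : 0 < gramDet (X i.1 i.2)) : wt X ε D i ≤ Real.exp (-D * ε i.1) := by
  unfold wt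
  rw [if_pos h, one_mul]
  exact mul_le_of_le_one_right (Real.exp_pos _).le (inv_le_one_of_one_le₀ (card_pos_bar X i h))

lemma wt_ge {N : ℕ} {T : Type} {Zty : T → Type}
    [∀ τ, Fintype (Zty τ)] {ℓ : T → ℕ}
    (X : (τ : T) → Zty τ → Matrix (Fin N) (Fin (ℓ τ)) ℝ) (ε : T → ℝ) (D : ℝ)
    (i : Σ τ : T, Zty τ) (h : 0 < gramDet (X i.1 i.2)) :
    Real.exp (-D * ε i.1) * (Fintype.card (Zty i.1) : ℝ)⁻¹ ≤ wt X ε D i := by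
  unfold wt
  rw [if_pos h, one_mul]
  apply mul_le_mul_of_nonneg_left _ (Real.exp_pos _).le
  apply inv_anti₀ (by linarith [card_pos_bar X i h])
  exact_mod_cast Finset.card_le_univ _

lemma arith_big {D lam M δ e es b2 ls li : ℝ} (hl : 0 < lam) (hM : 0 < M) (hδ : 0 < δ)
    (hD : 2 * (26 + 1 / lam + 2 * lam + 3 * M + 7 * lam ^ 2) / δ < D) (hb0 : 0 ≤ b2)
    (hi2 : 1/2 ≤ e) (hes : ls ≤ es) (hei : li ≤ e) (hse : es ≤ e)
    (hgap : δ / 2 * (e + b2) ≤ e - es) :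
    -D * e + (2 * lam * li + 3 * (M * e) + 3 * b2 + 3 * lam ^ 2) ≤
      -22 * e + (-D * es + -es) + -(ls / lam + lam ^ 2 / 2) := by
  obtain ⟨K, hK⟩ : ∃ K, K = 26 + 1 / lam + 2 * lam + 3 * M + 7 * lam ^ 2 := ⟨_, rfl⟩
  rw [← hK] at hD
  have hK0 : 0 < K := by rw [hK]; positivity
  have hl' : 0 < 1 / lam := by positivity
  have hD0 : 2 * K / δ < D := hD
  have hDK : K * (e + b2) ≤ D * (e - es) := by
    have h1 : 2 * K < D * δ := by rwa [div_lt_iff₀ hδ] at hD0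
    have h2 : 0 ≤ e + b2 := by linarith
    have hDpos : 0 < D := lt_of_le_of_lt (by positivity) hD0
    have h3 := mul_le_mul_of_nonneg_left hgap hDpos.le
    nlinarith
  have hd1 : ls / lam ≤ 1 / lam * e := by
    rw [div_eq_mul_inv, mul_comm, ← one_div]
    exact mul_le_mul_of_nonneg_left (hes.trans hse) hl'.le
  have hd2 : 2 * lam * li ≤ 2 * lam * e := mul_le_mul_of_nonneg_left hei (by positivity)
  have hd3 : 7/2 * lam ^ 2 ≤ 7 * lam ^ 2 * e := by nlinarith [sq_nonneg lam]
  have hexp : K * (e + b2) = 26 * e + 1 / lam * e + 2 * lam * e + 3 * (M * e) + 7 * lam ^ 2 * e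
     + 26 * b2 + (1 / lam + 2 * lam + 3 * M + 7 * lam ^ 2) * b2 := by rw [hK]; ring
  have hpos : 0 ≤ (1 / lam + 2 * lam + 3 * M + 7 * lam ^ 2) * b2 := by positivity
  linarith

lemma ratio_big {N : ℕ} {T : Type} {Zty : T → Type}
    [∀ τ, Fintype (Zty τ)] [∀ τ, Nonempty (Zty τ)] {ℓ : T → ℕ}
    (X : (τ : T) → Zty τ → Matrix (Fin N) (Fin (ℓ τ)) ℝ) (ε : T → ℝ)
    {D lam M δ : ℝ} (hl : 0 < lam) (hM : 0 < M) (hδ : 0 < δ) (hδ1 : δ < 1)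
    (hD : 2 * (26 + 1 / lam + 2 * lam + 3 * M + 7 * lam ^ 2) / δ < D)
    (hε : ∀ τ, (ℓ τ : ℝ) + Real.log (Fintype.card (Zty τ)) ≤ ε τ)
    (θ W : Fin N → ℝ) (τs : T) (Zs : Zty τs) (hs : 0 < gramDet (X τs Zs))
    (Qs : Fin (ℓ τs) → ℝ) (i : Σ τ : T, Zty τ)
    (hi : (1 + δ) * ε τs + δ * (enr fun t => (X τs Zs).mulVec Qs t - θ t) ^ 2 < ε i.1)
    (hi2 : 1/2 ≤ ε i.1)
    (hgood : ∀ Q : Fin (ℓ i.1) → ℝ,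
      ipr W (fun t => (X i.1 i.2).mulVec Q t - (X τs Zs).mulVec Qs t)
      ≤ Real.sqrt (M * ε i.1) * enr (fun t => (X i.1 i.2).mulVec Q t - (X τs Zs).mulVec Qs t)) :
    wt X ε D i * jI lam (fun t => θ t + W t) (X i.1 i.2) ≤
      Real.exp (-22 * ε i.1) *
        (wt X ε D ⟨τs, Zs⟩ * jI lam (fun t => θ t + W t) (X τs Zs)) := by
  by_cases hg : 0 < gramDet (X i.1 i.2)
  swap
  · have : wt X ε D i = 0 := by unfold wt; rw [if_neg hg]; ring
    rw [this, zero_mul]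
    have h1 := wt_nonneg X ε D ⟨τs, Zs⟩
    have h2 := jI_nonneg hl (fun t => θ t + W t) (X τs Zs)
    positivity
  set b2 := (enr fun t => (X τs Zs).mulVec Qs t - θ t) ^ 2 with hb2
  have hb0 : 0 ≤ b2 := sq_nonneg _
  set G := jF lam (fun t => θ t + W t) (X τs Zs) Qs with hG
  have hG0 : 0 < G := by rw [hG]; unfold jF; positivity
  have hup := jI_upper hl θ W ((X τs Zs).mulVec Qs) (X i.1 i.2) hg _ hgood
  have hGeq : Real.exp (-(1/2) * (enr fun t => θ t + W t - (X τs Zs).mulVec Qs t) ^ 2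
    - lam * enr ((X τs Zs).mulVec Qs)) = G := rfl
  rw [hGeq, Real.sq_sqrt (by positivity)] at hup
  have hlo := jI_lower hl (fun t => θ t + W t) (X τs Zs) hs Qs
  have hw1 := wt_le X ε D i hg
  have hw2 := wt_ge X ε D ⟨τs, Zs⟩ hs
  simp only at hw2
  have hlogn : ∀ τ, 0 ≤ Real.log (Fintype.card (Zty τ)) := fun τ =>
    Real.log_natCast_nonneg _
  have hcard : Real.exp (-ε τs) ≤ (Fintype.card (Zty τs) : ℝ)⁻¹ := by
    have : (0:ℝ) < Fintype.card (Zty τs) := by exact_mod_cast Fintype.card_pos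
    rw [Real.exp_neg]
    apply inv_anti₀ this
    rw [← Real.exp_log this]
    apply Real.exp_le_exp.mpr
    have := hε τs
    have h0 : (0:ℝ) ≤ ℓ τs := Nat.cast_nonneg _
    linarith
  have hw3 : Real.exp (-D * ε τs) * Real.exp (-ε τs) ≤ wt X ε D ⟨τs, Zs⟩ :=
    (mul_le_mul_of_nonneg_left hcard (Real.exp_pos _).le).trans hw2
  have hL : wt X ε D i * jI lam (fun t => θ t + W t) (X i.1 i.2) ≤
      Real.exp (-D * ε i.1) * (G * Real.exp (2 * lam * ℓ i.1 + 3 * (M * ε i.1) + 3 * b2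
        + 3 * lam ^ 2)) :=
    mul_le_mul hw1 hup (jI_nonneg hl _ _) (Real.exp_pos _).le
  have hR : (Real.exp (-D * ε τs) * Real.exp (-ε τs)) *
      (G * Real.exp (-(ℓ τs / lam + lam ^ 2 / 2))) ≤
      wt X ε D ⟨τs, Zs⟩ * jI lam (fun t => θ t + W t) (X τs Zs) :=
    mul_le_mul hw3 hlo (by positivity) (wt_nonneg _ _ _ _)
  refine hL.trans (le_trans ?_ (mul_le_mul_of_nonneg_left hR (Real.exp_pos _).le))
  have e1 : Real.exp (-D * ε i.1) * (G * Real.exp (2 * lam * ℓ i.1 + 3 * (M * ε i.1) + 3 * b2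
        + 3 * lam ^ 2)) = G * Real.exp (-D * ε i.1 + (2 * lam * ℓ i.1 + 3 * (M * ε i.1) + 3 * b2
        + 3 * lam ^ 2)) := by
    rw [Real.exp_add (-D * ε i.1)]; ring
  have e2 : Real.exp (-22 * ε i.1) * ((Real.exp (-D * ε τs) * Real.exp (-ε τs)) *
      (G * Real.exp (-(ℓ τs / lam + lam ^ 2 / 2)))) =
      G * Real.exp (-22 * ε i.1 + (-D * ε τs + -ε τs) + -(ℓ τs / lam + lam ^ 2 / 2)) := by
    rw [Real.exp_add, Real.exp_add, Real.exp_add]; ring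
  rw [e1, e2]
  apply mul_le_mul_of_nonneg_left _ hG0.le
  apply Real.exp_le_exp.mpr
  set e := ε i.1 with he
  have hes : (ℓ τs : ℝ) ≤ ε τs := by linarith [hε τs, hlogn τs]
  have hei : (ℓ i.1 : ℝ) ≤ e := by linarith [hε i.1, hlogn i.1]
  have hes0 : 0 ≤ ε τs := le_trans (Nat.cast_nonneg _) hes
  have hse : ε τs ≤ e := by nlinarith
  have hgap : δ / 2 * (e + b2) ≤ e - ε τs := by nlinarith
  exact arith_big hl hM hδ hD hb0 hi2 hes hei hse hgap

lemma small_facts {T : Type} {Zty : T → Type}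
    [∀ τ, Fintype (Zty τ)] [∀ τ, Nonempty (Zty τ)] {ℓ : T → ℕ} (ε : T → ℝ)
    (hε : ∀ τ, (ℓ τ : ℝ) + Real.log (Fintype.card (Zty τ)) ≤ ε τ) (τ : T) (h : ε τ < 1/2) :
    ℓ τ = 0 ∧ Fintype.card (Zty τ) = 1 := by
  have h1 := hε τ
  have h2 : 0 ≤ Real.log (Fintype.card (Zty τ)) := Real.log_natCast_nonneg _
  have h3 : (0:ℝ) ≤ ℓ τ := Nat.cast_nonneg _
  constructor
  · by_contra hne
    have : (1:ℝ) ≤ ℓ τ := by exact_mod_cast Nat.one_le_iff_ne_zero.mpr hne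
    linarith
  · by_contra hne
    have hp : 0 < Fintype.card (Zty τ) := Fintype.card_pos
    have : (2:ℝ) ≤ Fintype.card (Zty τ) := by exact_mod_cast (by omega)
    have h4 := Real.log_le_log (by norm_num) this
    linarith [Real.log_two_gt_d9]

lemma prob_bad {N : ℕ} {T : Type} [Fintype T] {Zty : T → Type}
    [∀ τ, Fintype (Zty τ)] [∀ τ, Nonempty (Zty τ)] {ℓ : T → ℕ}
    (X : (τ : T) → Zty τ → Matrix (Fin N) (Fin (ℓ τ)) ℝ) (ε : T → ℝ) {ρ : ℝ} (hρ : 0 < ρ)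
    (hε : ∀ τ, (ℓ τ : ℝ) + Real.log (Fintype.card (Zty τ)) ≤ ε τ)
    (hc : ∀ t : ℕ, 0 < t →
        (Finset.univ.filter fun τ => (t : ℝ) - 1 < ε τ ∧ ε τ ≤ (t : ℝ)).card ≤ t)
    (v : Fin N → ℝ) {Ω : Type} [MeasurableSpace Ω] (P : Measure Ω)
    (W : Ω → Fin N → ℝ) (hW : subG P ρ W) (big : T → Prop)
    (x : ℝ) (hb : ∀ τ, big τ → 1/2 ≤ ε τ ∧ x ≤ ε τ) :
    P {ω | ∃ i : Σ τ : T, Zty τ, big i.1 ∧ ¬ ∀ Q : Fin (ℓ i.1) → ℝ,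
      ipr (W ω) (fun t => (X i.1 i.2).mulVec Q t - v t)
      ≤ Real.sqrt (224 / ρ * ε i.1) * enr (fun t => (X i.1 i.2).mulVec Q t - v t)} ≤
    ENNReal.ofReal (Real.exp (-x) / 16) := by
  have hlog : ∀ τ, Real.log (Fintype.card (Zty τ)) ≤ ε τ := fun τ => by
    have h3 : (0:ℝ) ≤ ℓ τ := Nat.cast_nonneg _
    linarith [hε τ]
  have hsum := sigma_sum (Zty := Zty) ε big hlog hc x hb
  have hsub : {ω | ∃ i : Σ τ : T, Zty τ, big i.1 ∧ ¬ ∀ Q : Fin (ℓ i.1) → ℝ,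
      ipr (W ω) (fun t => (X i.1 i.2).mulVec Q t - v t)
      ≤ Real.sqrt (224 / ρ * ε i.1) * enr (fun t => (X i.1 i.2).mulVec Q t - v t)} ⊆
      ⋃ i ∈ (Finset.univ : Finset (Σ τ : T, Zty τ)), {ω | big i.1 ∧ ¬ ∀ Q : Fin (ℓ i.1) → ℝ,
      ipr (W ω) (fun t => (X i.1 i.2).mulVec Q t - v t)
      ≤ Real.sqrt (224 / ρ * ε i.1) * enr (fun t => (X i.1 i.2).mulVec Q t - v t)} := by
    rintro ω ⟨i, hi⟩
    exact Set.mem_biUnion (Finset.mem_coe.mpr (Finset.mem_univ i)) hi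
  refine (measure_mono hsub).trans ((measure_biUnion_finset_le _ _).trans ?_)
  refine le_trans ?_ (ENNReal.ofReal_le_ofReal hsum)
  rw [ENNReal.ofReal_sum_of_nonneg (fun i _ => by split_ifs <;> positivity)]
  apply Finset.sum_le_sum
  intro i _
  by_cases hbig : big i.1
  swap
  · simp [hbig]
  rw [if_pos hbig]
  have he := (hb _ hbig).1
  have hpos : 0 < 224 / ρ * ε i.1 := by
    have : 0 < ε i.1 := by linarith
    positivity
  have h1 := net_prob P W hW (X i.1 i.2) v (Real.sqrt_pos.mpr hpos)
  refine (measure_mono (fun ω hω => hω.2)).trans (h1.trans (ENNReal.ofReal_le_ofReal ?_))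
  rw [Real.sq_sqrt hpos.le]
  have h5 : (5:ℝ) ≤ Real.exp 2 := by
    have h1 : Real.exp 2 = Real.exp 1 ^ 2 := by rw [← Real.exp_nat_mul]; norm_num
    have h2 : (2.7 : ℝ) ≤ Real.exp 1 := by linarith [Real.exp_one_gt_d9]
    rw [h1]; nlinarith
  have hℓ : (ℓ i.1 : ℝ) ≤ ε i.1 := by
    have : 0 ≤ Real.log (Fintype.card (Zty i.1)) := Real.log_natCast_nonneg _
    linarith [hε i.1]
  calc (5:ℝ) ^ (ℓ i.1 + 1) * Real.exp (-ρ * (224 / ρ * ε i.1) / 8)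
      ≤ Real.exp 2 ^ (ℓ i.1 + 1) * Real.exp (-ρ * (224 / ρ * ε i.1) / 8) := by gcongr
    _ = Real.exp (2 * (ℓ i.1 + 1) - 28 * ε i.1) := by
        rw [← Real.exp_nat_mul, ← Real.exp_add]
        congr 1
        push_cast
        field_simp
        ring
    _ ≤ _ := by
        apply Real.exp_le_exp.mpr
        linarith

end helpers


/-- Theorem 1, first assertion (2.5): the model complexity selected by the posterior
distribution is bounded by the complexity of the oracle plus the model misspecification
term, with exponentially small exceptional posterior mass in expectation. -/
theorem main_theorem_complexity :
    ∀ lam ρ : ℝ, 0 < lam → 0 < ρ →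
    ∃ δ₀ : ℝ, 0 < δ₀ ∧ δ₀ ≤ 1 ∧ ∀ δ : ℝ, 0 < δ → δ < δ₀ →
    ∃ D₀ : ℝ, 0 < D₀ ∧ ∀ D : ℝ, D₀ < D →
    ∃ C' : ℝ, 0 < C' ∧
    ∀ (N : ℕ) (T : Type) [Fintype T] (Zty : T → Type) [∀ τ, Fintype (Zty τ)]
      [∀ τ, Nonempty (Zty τ)]
      (ℓ : T → ℕ) (X : (τ : T) → Zty τ → Matrix (Fin N) (Fin (ℓ τ)) ℝ) (ε : T → ℝ),
      (∀ τ, (ℓ τ : ℝ) + Real.log (Fintype.card (Zty τ)) ≤ ε τ) →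
      (∀ t : ℕ, 0 < t →
        (Finset.univ.filter fun τ => (t : ℝ) - 1 < ε τ ∧ ε τ ≤ (t : ℝ)).card ≤ t) →
      ∀ (θs : Fin N → ℝ) (τs : T) (Zs : Zty τs), 0 < gramDet (X τs Zs) →
      ∀ (Qs : Fin (ℓ τs) → ℝ)
        (Ω : Type) (_ : MeasurableSpace Ω) (P : Measure Ω) (_ : IsProbabilityMeasure P)
        (W : Ω → Fin N → ℝ), subG P ρ W →
      ∫ ω, framePost N ℓ X ε D lam (fun i => θs i + W ω i)
          {τ | (1 + δ) * ε τs
              + δ * (enr fun i => (X τs Zs).mulVec Qs i - θs i) ^ 2 < ε τ}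
          Set.univ ∂P
        ≤ Real.exp (-C' * (ε τs + (enr fun i => (X τs Zs).mulVec Qs i - θs i) ^ 2)) := by
  intro lam ρ hl hρ
  refine ⟨1, one_pos, le_rfl, fun δ hδ hδ1 => ?_⟩
  have hM : 0 < 224 / ρ := by positivity
  refine ⟨2 * (26 + 1 / lam + 2 * lam + 3 * (224 / ρ) + 7 * lam ^ 2) / δ, by positivity,
    fun D hD => ⟨δ / 4, by positivity, ?_⟩⟩
  intro N T _ Zty _ _ ℓ X ε hε hc θs τs Zs hs Qs Ω _ P _ W hW
  have hD0 : 0 < D := lt_trans (by positivity) hD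
  set b2 := (enr fun i => (X τs Zs).mulVec Qs i - θs i) ^ 2 with hb2
  have hb0 : 0 ≤ b2 := sq_nonneg _
  set A : Set T := {τ | (1 + δ) * ε τs + δ * b2 < ε τ} with hA
  have hε0 : ∀ τ, 0 ≤ ε τ := fun τ => by
    have h1 : (0:ℝ) ≤ ℓ τ := Nat.cast_nonneg _
    have h2 : 0 ≤ Real.log (Fintype.card (Zty τ)) := Real.log_natCast_nonneg _
    linarith [hε τ]
  have hlog : ∀ τ, Real.log (Fintype.card (Zty τ)) ≤ ε τ := fun τ => by
    have h3 : (0:ℝ) ≤ ℓ τ := Nat.cast_nonneg _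
    linarith [hε τ]
  have hAdef : ∀ τ, τ ∈ A → (1 + δ) * ε τs + δ * b2 < ε τ := fun τ h => h
  let big : T → Prop := fun τ => τ ∈ A ∧ 1/2 ≤ ε τ
  set x := δ * (ε τs + b2) with hx
  have hx0 : 0 ≤ x := mul_nonneg hδ.le (add_nonneg (hε0 _) hb0)
  have hb : ∀ τ, big τ → 1/2 ≤ ε τ ∧ x ≤ ε τ := by
    rintro τ ⟨h1, h2⟩
    have := hAdef τ h1
    refine ⟨h2, ?_⟩
    have h3 := hε0 τs
    rw [hx]; nlinarith
  have hsum := sigma_sum (Zty := Zty) ε big hlog hc x hb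
  have hPB := prob_bad X ε hρ hε hc ((X τs Zs).mulVec Qs) P W hW big x hb
  set Bad := {ω | ∃ i : Σ τ : T, Zty τ, big i.1 ∧ ¬ ∀ Q : Fin (ℓ i.1) → ℝ,
      ipr (W ω) (fun t => (X i.1 i.2).mulVec Q t - (X τs Zs).mulVec Qs t)
      ≤ Real.sqrt (224 / ρ * ε i.1) *
        enr (fun t => (X i.1 i.2).mulVec Q t - (X τs Zs).mulVec Qs t)} with hBad
  -- the individual terms
  let tm : Ω → (Σ τ : T, Zty τ) → ℝ := fun ω i =>
    wt X ε D i * jI lam (fun t => θs t + W ω t) (X i.1 i.2)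
  have htm0 : ∀ ω i, 0 ≤ tm ω i := fun ω i =>
    mul_nonneg (wt_nonneg _ _ _ _) (jI_nonneg hl _ _)
  have hf : ∀ ω, framePost N ℓ X ε D lam (fun i => θs i + W ω i) A Set.univ =
      (∑ i, if i.1 ∈ A then tm ω i else 0) / ∑ i, tm ω i := fun ω => framePost_eq X ε D lam _ A
  have hden0 : ∀ ω, 0 ≤ ∑ i, tm ω i := fun ω => Finset.sum_nonneg fun i _ => htm0 ω i
  have hf1 : ∀ ω, framePost N ℓ X ε D lam (fun i => θs i + W ω i) A Set.univ ≤ 1 := by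
    intro ω
    rw [hf ω]
    apply div_le_one_of_le₀ _ (hden0 ω)
    apply Finset.sum_le_sum
    intro i _
    split_ifs
    · exact le_rfl
    · exact htm0 ω i
  have hbigsum : ∀ ω, ω ∉ Bad → ∑ i, (if big i.1 then tm ω i else 0) ≤
      Real.exp (-x) / 16 * tm ω ⟨τs, Zs⟩ := by
    intro ω hω
    refine le_trans ?_ (mul_le_mul_of_nonneg_right hsum (htm0 ω _))
    rw [Finset.sum_mul]
    apply Finset.sum_le_sum
    intro i _
    split_ifs with hbi
    · refine ratio_big X ε hl hM hδ hδ1 hD hε θs (W ω) τs Zs hs Qs i (hAdef _ hbi.1) hbi.2 ?_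
      by_contra hcon
      exact hω ⟨i, hbi, hcon⟩
    · simp
  have hexp16 : 0 ≤ Real.exp (-x) / 16 := by positivity
  have hexpx1 : Real.exp (-x) ≤ 1 := Real.exp_le_one_iff.mpr (by linarith)
  have hgoal : -(δ / 4) * (ε τs + b2) = -x / 4 := by rw [hx]; ring
  rw [hgoal]
  by_cases hsmall : ∃ τ ∈ A, ε τ < 1/2
  · obtain ⟨τ0, h0A, h0⟩ := hsmall
    have hlt := hAdef τ0 h0A
    have hes0 := hε0 τs
    have hxlt : x < 1/2 := by rw [hx]; nlinarith
    have hlt' : ε τs < ε τ0 := by nlinarith [mul_nonneg hδ.le hes0, mul_nonneg hδ.le hb0]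
    obtain ⟨hℓ0, hc0⟩ := small_facts ε hε τ0 h0
    obtain ⟨hℓs, hcs⟩ := small_facts ε hε τs (hlt'.trans h0)
    obtain ⟨Z0, hZ0⟩ := Fintype.card_eq_one_iff.mp hc0
    have huniq : ∀ i : (Σ τ : T, Zty τ), i.1 ∈ A → ε i.1 < 1/2 → i = ⟨τ0, Z0⟩ := by
      rintro ⟨τ, Z⟩ hiA hi
      simp only at hiA hi
      have hcc := hc 1 one_pos
      have hτ : τ = τ0 := by
        refine Finset.card_le_one.mp hcc τ ?_ τ0 ?_
        · have := hAdef τ hiA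
          refine Finset.mem_filter.mpr ⟨Finset.mem_univ _, ?_, ?_⟩
          · push_cast
            nlinarith [mul_nonneg hδ.le hes0, mul_nonneg hδ.le hb0]
          · push_cast; linarith
        · refine Finset.mem_filter.mpr ⟨Finset.mem_univ _, ?_, ?_⟩
          · push_cast
            linarith
          · push_cast; linarith
      subst hτ
      rw [hZ0 Z]
    have hne : (⟨τ0, Z0⟩ : Σ τ : T, Zty τ) ≠ ⟨τs, Zs⟩ := by
      intro h
      have : τ0 = τs := congrArg Sigma.fst h
      rw [this] at hlt'; exact lt_irrefl _ hlt'
    have hle0 : ∀ ω, tm ω ⟨τ0, Z0⟩ ≤ tm ω ⟨τs, Zs⟩ := by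
      intro ω
      by_cases hg : 0 < gramDet (X τ0 Z0)
      swap
      · have : wt X ε D ⟨τ0, Z0⟩ = 0 := by unfold wt; rw [if_neg hg]; ring
        have h2 : tm ω ⟨τ0, Z0⟩ = 0 := by simp only [tm]; rw [this, zero_mul]
        rw [h2]; exact htm0 _ _
      simp only [tm]
      rw [jI_zero hℓ0, jI_zero hℓs]
      apply mul_le_mul_of_nonneg_right _ (Real.exp_pos _).le
      refine (wt_le X ε D ⟨τ0, Z0⟩ hg).trans (le_trans ?_ (wt_ge X ε D ⟨τs, Zs⟩ hs))
      simp only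
      rw [hcs]
      simp only [Nat.cast_one, inv_one, mul_one]
      apply Real.exp_le_exp.mpr
      nlinarith
    have hpt : ∀ ω, ω ∉ Bad →
        framePost N ℓ X ε D lam (fun i => θs i + W ω i) A Set.univ ≤ 1/2 + 1/16 := by
      intro ω hω
      rw [hf ω]
      have hnum : (∑ i, if i.1 ∈ A then tm ω i else 0) ≤
          tm ω ⟨τ0, Z0⟩ + ∑ i, (if big i.1 then tm ω i else 0) := by
        have : tm ω ⟨τ0, Z0⟩ = ∑ i, if i = ⟨τ0, Z0⟩ then tm ω i else 0 := by
          rw [Finset.sum_ite_eq' Finset.univ]; simp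
        rw [this, ← Finset.sum_add_distrib]
        apply Finset.sum_le_sum
        intro i _
        have hn := htm0 ω i
        by_cases hiA : i.1 ∈ A
        · rw [if_pos hiA]
          by_cases hi : ε i.1 < 1/2
          · rw [if_pos (huniq i hiA hi)]
            split_ifs <;> linarith
          · rw [if_pos (show big i.1 from ⟨hiA, not_lt.mp hi⟩)]
            split_ifs <;> linarith
        · rw [if_neg hiA]
          split_ifs <;> linarith
      have hden : tm ω ⟨τ0, Z0⟩ + tm ω ⟨τs, Zs⟩ ≤ ∑ i, tm ω i := by
        rw [← Finset.sum_pair hne]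
        exact Finset.sum_le_sum_of_subset_of_nonneg (Finset.subset_univ _)
          (fun i _ _ => htm0 ω i)
      apply div_le_of_le_mul₀ (hden0 ω) (by norm_num)
      have h1 := hbigsum ω hω
      have h2 := hle0 ω
      have h3 : Real.exp (-x) / 16 * tm ω ⟨τs, Zs⟩ ≤ 1/16 * tm ω ⟨τs, Zs⟩ :=
        mul_le_mul_of_nonneg_right (by linarith) (htm0 ω _)
      have h4 := htm0 ω ⟨τ0, Z0⟩
      linarith
    have hfin := int_bound P _ hf1 Bad hexp16 (by norm_num) hPB hpt
    have : 1 - x / 4 ≤ Real.exp (-x / 4) := by linarith [Real.add_one_le_exp (-x / 4)]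
    linarith
  · push Not at hsmall
    have hpt : ∀ ω, ω ∉ Bad →
        framePost N ℓ X ε D lam (fun i => θs i + W ω i) A Set.univ ≤ Real.exp (-x) / 16 := by
      intro ω hω
      rw [hf ω]
      apply div_le_of_le_mul₀ (hden0 ω) hexp16
      have hden : tm ω ⟨τs, Zs⟩ ≤ ∑ i, tm ω i :=
        Finset.single_le_sum (fun i _ => htm0 ω i) (Finset.mem_univ _)
      refine le_trans ?_ ((hbigsum ω hω).trans (mul_le_mul_of_nonneg_left hden hexp16))
      apply Finset.sum_le_sum
      intro i _
      by_cases hiA : i.1 ∈ A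
      · rw [if_pos hiA, if_pos (show big i.1 from ⟨hiA, hsmall _ hiA⟩)]
      · rw [if_neg hiA]
        split_ifs
        · exact htm0 ω i
        · exact le_rfl
    have hfin := int_bound P _ hf1 Bad hexp16 hexp16 hPB hpt
    have : Real.exp (-x) ≤ Real.exp (-x / 4) := Real.exp_le_exp.mpr (by linarith)
    have hp := Real.exp_pos (-x)
    linarith
end

section
/- (Corollary 3, biclustering.) Suppose Y = θ* + W ∈ ℝ^{n×m} where θ*_{ij} = Q*_{z₁*(i)z₂*(j)} for some Q* ∈ ℝ^{k*×l*}, z₁* ∈ [k*]^n, z₂* ∈ [l*]^m, and W is sub-Gaussian with parameter ρ. Then for any constants λ, ρ > 0 and any sufficiently small constant δ ∈ (0,1), there exists a constant D_{λ,δ,ρ} > 0 depending only on λ, δ, ρ such that for every D > D_{λ,δ,ρ} there exist constants M, C', C'' > 0 depending only on λ, δ, ρ, D with: E Π( kl + n log k + m log l > (1+δ)(k*l* + n log k* + m log l*) | Y ) ≤ exp(−C'(k*l* + n log k* + m log l*)) and E Π( Σ_{i,j}(θ_{ij} − θ*_{ij})² > M(k*l* + n log k* + m log l*) | Y ) ≤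 exp(−C''(k*l* + n log k* + m log l*)). -/
open MeasureTheory Real Matrix
open scoped ENNReal Classical

/-- The design matrix of the biclustering model: it maps `Q ∈ ℝ^{k×l}` to the array
`(Q_{z₁(i)z₂(j)})_{(i,j)}`. -/
noncomputable def bicX (n m k l : ℕ) (z₁ : Fin n → Fin k) (z₂ : Fin m → Fin l) :
    Matrix (Fin n × Fin m) (Fin k × Fin l) ℝ :=
  fun p q => if z₁ p.1 = q.1 ∧ z₂ p.2 = q.2 then 1 else 0

/-- The posterior distribution for the biclustering prior: `(k,l)` is sampled with weight
proportional to `(Γ(kl)/Γ(kl/2)) exp(-D(kl + n log k + m log l))`, `(z₁,z₂)` uniformly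
from `[k]^n × [l]^m`, `Q` from the elliptical Laplace density
`∝ exp(-λ√(Σ_{ij} Q_{z₁(i)z₂(j)}²))`, and the Gaussian pseudo-likelihood
`∝ exp(-½Σ_{ij}(Y_{ij} - θ_{ij})²)` is used; `K` restricts `(k,l)` and `U` restricts the
signal matrix `θ`.  (The Gamma correction factor has been cancelled.) -/
noncomputable def bicPost (n m : ℕ) (D lam : ℝ) (Y : Fin n × Fin m → ℝ)
    (K : Set (ℕ × ℕ)) (U : Set (Fin n → Fin m → ℝ)) : ℝ :=
  gpostP
    (fun i : Σ kl : Fin n × Fin m,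
        ((Fin n → Fin ((kl.1 : ℕ) + 1)) × (Fin m → Fin ((kl.2 : ℕ) + 1))) =>
      Real.exp (-D * ((((i.1.1 : ℕ) + 1 : ℕ) : ℝ) * (((i.1.2 : ℕ) + 1 : ℕ) : ℝ)
          + (n : ℝ) * Real.log (((i.1.1 : ℕ) + 1 : ℕ))
          + (m : ℝ) * Real.log (((i.1.2 : ℕ) + 1 : ℕ)))) *
        ((((i.1.1 : ℕ) + 1 : ℕ) : ℝ) ^ n * (((i.1.2 : ℕ) + 1 : ℕ) : ℝ) ^ m)⁻¹)
    (fun i => bicX n m ((i.1.1 : ℕ) + 1) ((i.1.2 : ℕ) + 1) i.2.1 i.2.2)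
    (fun i Q => fun a b => Q (i.2.1 a, i.2.2 b))
    lam Y
    {i | (((i.1.1 : ℕ) + 1), ((i.1.2 : ℕ) + 1)) ∈ K} U


namespace BC

lemma integral_prod_gauss {κ : Type*} [Fintype κ] (N c : κ → ℝ) (hN : ∀ q, 0 < N q) (b : ℝ) (hb : 0 < b) :
    Integrable (fun Q : κ → ℝ => Real.exp (-b * ∑ q, N q * (Q q - c q) ^ 2)) ∧
    Real.sqrt (∏ q, N q) * ∫ Q : κ → ℝ, Real.exp (-b * ∑ q, N q * (Q q - c q) ^ 2)
      = (Real.sqrt (π / b)) ^ Fintype.card κ := by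
  have h1 : (fun Q : κ → ℝ => Real.exp (-b * ∑ q, N q * (Q q - c q) ^ 2))
      = fun Q : κ → ℝ => ∏ q, Real.exp (-(b * N q) * (Q q - c q) ^ 2) := by
    funext Q
    rw [← Real.exp_sum, Finset.mul_sum]
    congr 1
    exact Finset.sum_congr rfl fun q _ => by ring
  rw [h1]
  constructor
  · exact Integrable.fintype_prod (f := fun q (x : ℝ) => Real.exp (-(b * N q) * (x - c q) ^ 2))
      (fun q => (integrable_exp_neg_mul_sq (mul_pos hb (hN q))).comp_sub_right (c q))
  · rw [integral_fintype_prod_volume_eq_prod (f := fun q (x : ℝ) => Real.exp (-(b * N q) * (x - c q) ^ 2))]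
    have h2 : ∀ q, ∫ x : ℝ, Real.exp (-(b * N q) * (x - c q) ^ 2) = Real.sqrt (π / (b * N q)) := by
      intro q
      rw [integral_sub_right_eq_self (fun x : ℝ => Real.exp (-(b * N q) * x ^ 2)) (c q)]
      exact integral_gaussian _
    simp_rw [h2]
    rw [Real.sqrt_prod _ (fun q _ => (hN q).le), ← Finset.prod_mul_distrib]
    rw [Finset.prod_congr rfl (g := fun _ => Real.sqrt (π / b))]
    · simp
    · intro q _
      rw [← Real.sqrt_mul (hN q).le]
      congr 1
      have := (hN q).ne'
      field_simp

lemma mulVec_bicX (n m k l : ℕ) (z₁ : Fin n → Fin k) (z₂ : Fin m → Fin l) (Q : Fin k × Fin l → ℝ)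
    (p : Fin n × Fin m) : (bicX n m k l z₁ z₂).mulVec Q p = Q (z₁ p.1, z₂ p.2) := by
  simp only [Matrix.mulVec, dotProduct, bicX]
  rw [Finset.sum_eq_single (z₁ p.1, z₂ p.2)]
  · simp
  · intro q _ hq
    rw [if_neg]
    · simp
    · rintro ⟨h1, h2⟩
      exact hq (Prod.ext h1.symm h2.symm)
  · simp

/-- block sizes -/
noncomputable def cnt {N κ : Type*} [Fintype N] (z : N → κ) (q : κ) : ℝ :=
  ((Finset.univ.filter (fun p => z p = q)).card : ℝ)

lemma sum_comp_eq {N κ : Type*} [Fintype N] [Fintype κ] (z : N → κ) (f : κ → ℝ) :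
    ∑ p, f (z p) = ∑ q, cnt z q * f q := by
  rw [← Finset.sum_fiberwise (s := Finset.univ) (g := z)]
  refine Finset.sum_congr rfl fun q _ => ?_
  rw [Finset.sum_congr rfl (g := fun _ => f q)]
  · simp [cnt]
  · intro p hp
    rw [(Finset.mem_filter.1 hp).2]

lemma gramDet_bicX (n m k l : ℕ) (z₁ : Fin n → Fin k) (z₂ : Fin m → Fin l) :
    gramDet (bicX n m k l z₁ z₂) = ∏ q, cnt (fun p : Fin n × Fin m => (z₁ p.1, z₂ p.2)) q := by
  have : (bicX n m k l z₁ z₂)ᵀ * (bicX n m k l z₁ z₂)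
      = Matrix.diagonal (cnt (fun p : Fin n × Fin m => (z₁ p.1, z₂ p.2))) := by
    ext q r
    rw [Matrix.mul_apply]
    by_cases h : q = r
    · subst h
      simp only [Matrix.diagonal_apply_eq, cnt, Finset.card_filter, Matrix.transpose_apply, bicX,
        Prod.ext_iff]
      push_cast
      refine Finset.sum_congr rfl fun p _ => ?_
      split_ifs <;> simp
    · rw [Matrix.diagonal_apply_ne _ h]
      apply Finset.sum_eq_zero
      intro p _
      simp only [Matrix.transpose_apply, bicX]
      split_ifs with h1 h2
      · exact absurd (Prod.ext (h1.1.symm.trans h2.1) (h1.2.symm.trans h2.2)) h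
      all_goals simp
  rw [gramDet, this, Matrix.det_diagonal]

/-- Jensen on blocks -/
lemma block_lower {N κ : Type*} [Fintype N] [Fintype κ] (z : N → κ) (θ : N → ℝ)
    (h : ∀ q, 0 < cnt z q) :
    ∃ c : κ → ℝ, ∀ Q : κ → ℝ, ∑ q, cnt z q * (Q q - c q) ^ 2 ≤ ∑ p, (Q (z p) - θ p) ^ 2 := by
  refine ⟨fun q => (∑ p with z p = q, θ p) / cnt z q, fun Q => ?_⟩
  rw [← Finset.sum_fiberwise (s := Finset.univ) (g := z) (f := fun p => (Q (z p) - θ p) ^ 2)]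
  refine Finset.sum_le_sum fun q _ => ?_
  have h1 : ∑ p with z p = q, (Q (z p) - θ p) = cnt z q * Q q - ∑ p with z p = q, θ p := by
    rw [Finset.sum_sub_distrib]
    congr 1
    rw [Finset.sum_congr rfl (g := fun _ => Q q)]
    · simp [cnt]
    · intro p hp
      rw [(Finset.mem_filter.1 hp).2]
  have h2 := sq_sum_le_card_mul_sum_sq (s := Finset.univ.filter (fun p => z p = q))
    (f := fun p => Q (z p) - θ p)
  rw [h1] at h2
  have h3 : cnt z q * (Q q - (∑ p with z p = q, θ p) / cnt z q) ^ 2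
    = (cnt z q * Q q - ∑ p with z p = q, θ p) ^ 2 / cnt z q := by
    have := (h q).ne'
    field_simp
  rw [h3, div_le_iff₀ (h q)]
  refine h2.trans (le_of_eq ?_)
  rw [mul_comm]; rfl

section enr
variable {N : Type*} [Fintype N]

lemma enr_nonneg (v : N → ℝ) : 0 ≤ enr v := Real.sqrt_nonneg _

lemma enr_sq (v : N → ℝ) : enr v ^ 2 = ∑ i, v i ^ 2 :=
  Real.sq_sqrt (Finset.sum_nonneg fun _ _ => sq_nonneg _)

lemma enr_eq_norm (v : N → ℝ) : enr v = ‖(WithLp.toLp 2 v : EuclideanSpace ℝ N)‖ := by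
  rw [EuclideanSpace.norm_eq]
  simp [enr]

lemma enr_add_le (u v : N → ℝ) : enr (fun t => u t + v t) ≤ enr u + enr v := by
  rw [enr_eq_norm, enr_eq_norm, enr_eq_norm]
  exact norm_add_le (WithLp.toLp 2 u : EuclideanSpace ℝ N) (WithLp.toLp 2 v)

lemma enr_neg (v : N → ℝ) : enr (fun t => - v t) = enr v := by
  simp [enr]

lemma continuous_enr_comp {X : Type*} [TopologicalSpace X] (f : X → N → ℝ) (hf : ∀ t, Continuous fun x => f x t) :
    Continuous fun x => enr (f x) := by
  unfold enr
  fun_prop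

end enr

section terms
variable {N κ : Type*} [Fintype N] [Fintype κ]

/-- the posterior integrand -/
noncomputable def Fz (z : N → κ) (lam : ℝ) (Y : N → ℝ) (Q : κ → ℝ) : ℝ :=
  Real.exp (-(1/2) * (enr fun t => Y t - Q (z t)) ^ 2 - lam * enr (fun t => Q (z t)))

lemma Fz_cont {N κ : Type*} [Fintype N] (z : N → κ) (lam : ℝ) (Y : N → ℝ) : Continuous (Fz z lam Y) := by
  unfold Fz
  have h1 : Continuous fun Q : κ → ℝ => enr fun t => Y t - Q (z t) :=
    continuous_enr_comp (fun (Q : κ → ℝ) t => Y t - Q (z t)) (fun t => by fun_prop)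
  have h2 : Continuous fun Q : κ → ℝ => enr fun t => Q (z t) :=
    continuous_enr_comp (fun (Q : κ → ℝ) t => Q (z t)) (fun t => by fun_prop)
  fun_prop

lemma Fz_integrable (z : N → κ) (lam : ℝ) (hlam : 0 < lam) (Y : N → ℝ) (hz : ∀ q, 0 < cnt z q) :
    Integrable (Fz z lam Y) := by
  obtain ⟨c, hc⟩ := block_lower z Y hz
  refine ((integral_prod_gauss (cnt z) c hz (1/2) (by norm_num)).1).mono'
    (Fz_cont z lam Y).aestronglyMeasurable (Filter.Eventually.of_forall fun Q => ?_)
  rw [Fz, Real.norm_eq_abs, abs_of_pos (Real.exp_pos _)]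
  apply Real.exp_le_exp.2
  have h1 : 0 ≤ lam * enr (fun t => Q (z t)) := mul_nonneg hlam.le (enr_nonneg _)
  have h2 : (enr fun t => Y t - Q (z t)) ^ 2 = ∑ p, (Q (z p) - Y p) ^ 2 := by
    rw [enr_sq]; exact Finset.sum_congr rfl fun p _ => by ring
  rw [h2]
  have := hc Q
  linarith

lemma term_upper (z : N → κ) (lam : ℝ) (hlam : 0 < lam) (θ W : N → ℝ) (hz : ∀ q, 0 < cnt z q)
    (T R : ℝ) (S : Set (κ → ℝ)) (hS : MeasurableSet S)
    (hT : ∀ Q : κ → ℝ, ipr W (fun t => Q (z t) - θ t) ≤ T * enr (fun t => Q (z t) - θ t))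
    (hR : ∀ Q ∈ S, R ≤ enr (fun t => Q (z t) - θ t) ^ 2) :
    Real.sqrt (∏ q, cnt z q) * (lam / Real.sqrt π) ^ Fintype.card κ *
      ∫ Q in S, Fz z lam (fun t => θ t + W t) Q
    ≤ Real.exp (-(1/2) * enr W ^ 2 - lam * enr θ) *
      Real.exp (2 * T ^ 2 + 2 * lam ^ 2 + 3 * lam * Fintype.card κ - R / 8) := by
  obtain ⟨c, hc⟩ := block_lower z θ hz
  obtain ⟨hgi, hg⟩ := integral_prod_gauss (cnt z) c hz (1/8) (by norm_num)
  set E := Real.exp (-(1/2) * enr W ^ 2 - lam * enr θ) * Real.exp (2 * T ^ 2 + 2 * lam ^ 2 - R / 8) with hE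
  have hpt : ∀ Q ∈ S, Fz z lam (fun t => θ t + W t) Q ≤
      E * Real.exp (-(1/8) * ∑ q, cnt z q * (Q q - c q) ^ 2) := by
    intro Q hQ
    rw [Fz, hE, ← Real.exp_add, ← Real.exp_add]
    apply Real.exp_le_exp.2
    set r := enr (fun t => Q (z t) - θ t) with hr
    have h0 : (enr fun t => θ t + W t - Q (z t)) ^ 2
        = enr W ^ 2 - 2 * ipr W (fun t => Q (z t) - θ t) + r ^ 2 := by
      rw [hr, enr_sq, enr_sq, enr_sq, ipr, Finset.mul_sum, ← Finset.sum_sub_distrib,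
        ← Finset.sum_add_distrib]
      exact Finset.sum_congr rfl fun p _ => by ring
    have h1 : enr θ ≤ enr (fun t => Q (z t)) + r := by
      have := enr_add_le (fun t => Q (z t)) (fun t => - (Q (z t) - θ t))
      rw [enr_neg] at this
      simpa using this
    have h2 := hT Q
    have h3 : ∑ q, cnt z q * (Q q - c q) ^ 2 ≤ r ^ 2 := by
      rw [hr, enr_sq]; exact hc Q
    have h4 := hR Q hQ
    have h1' := mul_le_mul_of_nonneg_left h1 hlam.le
    rw [h0]
    nlinarith [sq_nonneg (T - lam), sq_nonneg (T + lam - r / 2)]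
  have hint : ∫ Q in S, Fz z lam (fun t => θ t + W t) Q ≤
      E * ∫ Q : κ → ℝ, Real.exp (-(1/8) * ∑ q, cnt z q * (Q q - c q) ^ 2) := by
    calc _ ≤ ∫ (Q : κ → ℝ) in S, E * Real.exp (-(1/8) * ∑ q, cnt z q * (Q q - c q) ^ 2) :=
          setIntegral_mono_on (Fz_integrable z lam hlam _ hz).integrableOn
            (hgi.const_mul E).integrableOn hS hpt
      _ ≤ ∫ Q : κ → ℝ, E * Real.exp (-(1/8) * ∑ q, cnt z q * (Q q - c q) ^ 2) := by
          apply setIntegral_le_integral (hgi.const_mul E)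
          exact Filter.Eventually.of_forall fun Q => by positivity
      _ = _ := integral_const_mul _ _
  have hπ : 0 < Real.sqrt π := Real.sqrt_pos.2 Real.pi_pos
  calc _ ≤ Real.sqrt (∏ q, cnt z q) * (lam / Real.sqrt π) ^ Fintype.card κ *
      (E * ∫ Q : κ → ℝ, Real.exp (-(1/8) * ∑ q, cnt z q * (Q q - c q) ^ 2)) := by
        apply mul_le_mul_of_nonneg_left hint; positivity
    _ = (lam / Real.sqrt π) ^ Fintype.card κ * E * (Real.sqrt (∏ q, cnt z q) *
        ∫ Q : κ → ℝ, Real.exp (-(1/8) * ∑ q, cnt z q * (Q q - c q) ^ 2)) := by ring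
    _ = (lam / Real.sqrt π * Real.sqrt (π / (1/8))) ^ Fintype.card κ * E := by
        rw [hg, mul_pow]; ring
    _ ≤ (Real.exp (3 * lam)) ^ Fintype.card κ * E := by
        apply mul_le_mul_of_nonneg_right _ (by positivity)
        apply pow_le_pow_left₀ (by positivity)
        have : Real.sqrt (π / (1/8)) = Real.sqrt 8 * Real.sqrt π := by
          rw [← Real.sqrt_mul (by norm_num)]; congr 1; ring
        rw [this]
        have h8 : Real.sqrt 8 ≤ 3 := Real.sqrt_le_iff.2 ⟨by norm_num, by norm_num⟩
        have : lam / Real.sqrt π * (Real.sqrt 8 * Real.sqrt π) = lam * Real.sqrt 8 := by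
          field_simp
        rw [this]
        have := Real.add_one_le_exp (3 * lam)
        nlinarith
    _ = _ := by
        rw [hE, ← Real.exp_nat_mul, ← Real.exp_add, ← Real.exp_add, ← Real.exp_add]
        congr 1; ring

lemma term_lower (z : N → κ) (lam : ℝ) (hlam : 0 < lam) (θ W : N → ℝ) (hz : ∀ q, 0 < cnt z q)
    (c : κ → ℝ) (hc : ∀ t, θ t = c (z t)) :
    Real.exp (-(1/2) * enr W ^ 2 - lam * enr θ) *
      Real.exp (-(lam ^ 2 / 2) - Fintype.card κ / lam) ≤
    Real.sqrt (∏ q, cnt z q) * (lam / Real.sqrt π) ^ Fintype.card κ *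
      ∫ Q, Fz z lam (fun t => θ t + W t) Q := by
  obtain ⟨hgi, hg⟩ := integral_prod_gauss (cnt z) (fun _ => 0) hz 1 (by norm_num)
  set F := Fz z lam (fun t => θ t + W t) with hF
  have hFi : Integrable F := Fz_integrable z lam hlam _ hz
  set E := Real.exp (-(1/2) * enr W ^ 2 - lam * enr θ) * Real.exp (-(lam ^ 2 / 2)) with hE
  have h1 : ∫ Q, F (c + Q) = ∫ Q, F Q := integral_add_left_eq_self F c
  have h2 : ∫ Q, F (c - Q) = ∫ Q, F Q := integral_sub_left_eq_self F volume c
  have hi1 : Integrable (fun Q => F (c + Q)) := hFi.comp_add_left c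
  have hi2 : Integrable (fun Q => F (c - Q)) := hFi.comp_sub_left c
  have hpt : ∀ Q, 2 * (E * Real.exp (-1 * ∑ q, cnt z q * (Q q - 0) ^ 2)) ≤ F (c + Q) + F (c - Q) := by
    intro Q
    have hu : ∑ q, cnt z q * (Q q - 0) ^ 2 = enr (fun t => Q (z t)) ^ 2 := by
      rw [enr_sq, ← sum_comp_eq z (fun q => (Q q - 0) ^ 2)]
      simp
    rw [hu]
    set r := enr (fun t => Q (z t)) with hr
    have e1 : enr (fun t => (c + Q) (z t)) ≤ enr θ + r := by
      have := enr_add_le θ (fun t => Q (z t))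
      simpa [hc] using this
    have e2 : enr (fun t => (c - Q) (z t)) ≤ enr θ + r := by
      have := enr_add_le θ (fun t => - Q (z t))
      rw [enr_neg] at this
      simpa [hc, sub_eq_add_neg] using this
    have e3 : (enr fun t => θ t + W t - (c + Q) (z t)) ^ 2 + (enr fun t => θ t + W t - (c - Q) (z t)) ^ 2
        = 2 * enr W ^ 2 + 2 * r ^ 2 := by
      rw [hr, enr_sq, enr_sq, enr_sq, enr_sq, Finset.mul_sum, Finset.mul_sum,
        ← Finset.sum_add_distrib, ← Finset.sum_add_distrib]
      refine Finset.sum_congr rfl fun p _ => ?_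
      simp only [hc, Pi.add_apply, Pi.sub_apply]
      ring
    simp only [hF, Fz]
    set a := -(1/2) * (enr fun t => θ t + W t - (c + Q) (z t)) ^ 2 - lam * enr (fun t => (c + Q) (z t)) with ha
    set b := -(1/2) * (enr fun t => θ t + W t - (c - Q) (z t)) ^ 2 - lam * enr (fun t => (c - Q) (z t)) with hb
    have e4 : 2 * Real.exp ((a + b) / 2) ≤ Real.exp a + Real.exp b := by
      have f1 : Real.exp a = Real.exp (a/2) ^ 2 := by rw [sq, ← Real.exp_add]; congr 1; ring
      have f2 : Real.exp b = Real.exp (b/2) ^ 2 := by rw [sq, ← Real.exp_add]; congr 1; ring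
      have f3 : Real.exp ((a + b)/2) = Real.exp (a/2) * Real.exp (b/2) := by
        rw [← Real.exp_add]; congr 1; ring
      rw [f1, f2, f3]
      nlinarith [sq_nonneg (Real.exp (a/2) - Real.exp (b/2))]
    refine le_trans ?_ e4
    rw [hE, ← Real.exp_add, ← Real.exp_add]
    apply mul_le_mul_of_nonneg_left _ (by norm_num)
    apply Real.exp_le_exp.2
    have e1' := mul_le_mul_of_nonneg_left e1 hlam.le
    have e2' := mul_le_mul_of_nonneg_left e2 hlam.le
    nlinarith [sq_nonneg (lam - r)]
  have hint : E * ∫ Q : κ → ℝ, Real.exp (-1 * ∑ q, cnt z q * (Q q - 0) ^ 2) ≤ ∫ Q, F Q := by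
    have := integral_mono ((hgi.const_mul E).const_mul 2) (hi1.add hi2) hpt
    simp only [Pi.add_apply] at this
    rw [integral_add hi1 hi2, h1, h2, integral_const_mul, integral_const_mul] at this
    linarith
  have hπ : 0 < Real.sqrt π := Real.sqrt_pos.2 Real.pi_pos
  calc _ = E * Real.exp (-(1/lam)) ^ Fintype.card κ := by
        rw [hE, ← Real.exp_nat_mul, ← Real.exp_add, ← Real.exp_add, ← Real.exp_add]
        congr 1; ring
    _ ≤ E * lam ^ Fintype.card κ := by
        apply mul_le_mul_of_nonneg_left _ (by positivity)
        apply pow_le_pow_left₀ (by positivity)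
        rw [Real.exp_neg, inv_le_comm₀ (Real.exp_pos _) hlam]
        have := Real.add_one_le_exp (1 / lam)
        rw [one_div] at *
        linarith
    _ = (lam / Real.sqrt π) ^ Fintype.card κ * E * (Real.sqrt (∏ q, cnt z q) *
        ∫ Q : κ → ℝ, Real.exp (-1 * ∑ q, cnt z q * (Q q - 0) ^ 2)) := by
        rw [hg, div_one, div_pow]
        field_simp
    _ = Real.sqrt (∏ q, cnt z q) * (lam / Real.sqrt π) ^ Fintype.card κ *
        (E * ∫ Q : κ → ℝ, Real.exp (-1 * ∑ q, cnt z q * (Q q - 0) ^ 2)) := by ring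
    _ ≤ _ := by
        apply mul_le_mul_of_nonneg_left hint; positivity
end terms

section net

lemma exists_net (E : Type*) [NormedAddCommGroup E] [NormedSpace ℝ E] [FiniteDimensional ℝ E] :
    ∃ s : Finset E, s.card ≤ 5 ^ Module.finrank ℝ E ∧ (∀ c ∈ s, ‖c‖ ≤ 2) ∧
      ∀ x : E, ‖x‖ ≤ 2 → ∃ c ∈ s, ‖x - c‖ ≤ 1 := by
  let p : ℕ → Prop := fun j => ∃ s : Finset E, s.card = j ∧ (∀ c ∈ s, ‖c‖ ≤ 2) ∧
    (∀ c ∈ s, ∀ d ∈ s, c ≠ d → 1 ≤ ‖c - d‖)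
  have hp0 : p 0 := ⟨∅, by simp⟩
  have hb : ∀ j, p j → j ≤ 5 ^ Module.finrank ℝ E := by
    rintro j ⟨s, rfl, h1, h2⟩
    exact Besicovitch.card_le_of_separated s h1 h2
  obtain ⟨s, hs, h1, h2⟩ : p (Nat.findGreatest p (5 ^ Module.finrank ℝ E)) :=
    Nat.findGreatest_spec (Nat.zero_le _) hp0
  refine ⟨s, Besicovitch.card_le_of_separated s h1 h2, h1, fun x hx => ?_⟩
  by_contra hcon
  push Not at hcon
  have hxs : x ∉ s := fun h => by
    have := hcon x h
    simp at this
    linarith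
  have hp : p (s.card + 1) := by
    refine ⟨insert x s, Finset.card_insert_of_notMem hxs, ?_, ?_⟩
    · intro c hc
      rcases Finset.mem_insert.1 hc with rfl | hc
      · exact hx
      · exact h1 c hc
    · intro c hc d hd hcd
      rcases Finset.mem_insert.1 hc with hc' | hc' <;> rcases Finset.mem_insert.1 hd with hd' | hd'
      · exact absurd (hc'.trans hd'.symm) hcd
      · rw [hc']; exact (hcon d hd').le
      · rw [hd', norm_sub_rev]; exact (hcon c hc').le
      · exact h2 c hc' d hd' hcd
  have := Nat.le_findGreatest (hb _ hp) hp
  omega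

variable {N Ω : Type*} [Fintype N] [MeasurableSpace Ω]

lemma ipr_eq_inner (u v : N → ℝ) :
    ipr u v = inner ℝ (WithLp.toLp 2 u : EuclideanSpace ℝ N) (WithLp.toLp 2 v) := by
  simp [ipr, PiLp.inner_apply, mul_comm]

lemma subspace_tail (P : Measure Ω) (ρ : ℝ) (W : Ω → N → ℝ) (hW : subG P ρ W)
    (S : Submodule ℝ (EuclideanSpace ℝ N)) (T : ℝ) (hT : 0 < T) :
    P {ω | ∃ u : N → ℝ, WithLp.toLp 2 u ∈ S ∧ T * enr u < ipr (W ω) u}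
      ≤ (5 ^ Module.finrank ℝ S : ℕ) * ENNReal.ofReal (Real.exp (-ρ * T ^ 2 / 8)) := by
  obtain ⟨s, hcard, hs2, hnet⟩ := exists_net S
  have hsub : {ω | ∃ u : N → ℝ, WithLp.toLp 2 u ∈ S ∧ T * enr u < ipr (W ω) u}
      ⊆ ⋃ c ∈ s.filter (fun c => c ≠ 0), {ω | T / 2 < |ipr (W ω) ((‖c‖)⁻¹ • (c : EuclideanSpace ℝ N)).ofLp|} := by
    rintro ω ⟨u, huS, hu⟩
    set w : S := S.orthogonalProjectionOnto (WithLp.toLp 2 (W ω)) with hw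
    have key : ∀ v : S, inner ℝ (WithLp.toLp 2 (W ω) : EuclideanSpace ℝ N) (v : EuclideanSpace ℝ N) = inner ℝ w v := by
      intro v
      rw [hw, Submodule.inner_orthogonalProjectionOnto_eq_of_mem_right]
    have hwT : T < ‖w‖ := by
      rw [ipr_eq_inner, key ⟨_, huS⟩] at hu
      have h1 := real_inner_le_norm w ⟨WithLp.toLp 2 u, huS⟩
      have h2 : ‖(⟨WithLp.toLp 2 u, huS⟩ : S)‖ = enr u := by
        rw [enr_eq_norm]; rfl
      rw [h2] at h1
      by_contra hcon
      push Not at hcon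
      have := mul_le_mul_of_nonneg_right hcon (enr_nonneg u)
      linarith
    have hw0 : 0 < ‖w‖ := hT.trans hwT
    obtain ⟨c, hcs, hc⟩ := hnet ((2 / ‖w‖) • w) (by
      rw [norm_smul, Real.norm_eq_abs, abs_of_pos (by positivity)]
      field_simp; rfl)
    have h3 : ‖w‖ ≤ inner ℝ w c := by
      have h4 := real_inner_le_norm w ((2 / ‖w‖) • w - c)
      have h6 : inner ℝ w ((2 / ‖w‖) • w) = (2 / ‖w‖) * inner ℝ w w := real_inner_smul_right w w _
      rw [inner_sub_right, h6, real_inner_self_eq_norm_sq] at h4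
      have h5 : 2 / ‖w‖ * ‖w‖ ^ 2 = 2 * ‖w‖ := by field_simp
      rw [h5] at h4
      nlinarith
    have hc0 : c ≠ 0 := by
      rintro rfl
      rw [inner_zero_right] at h3
      linarith
    have hcn : 0 < ‖c‖ := norm_pos_iff.2 hc0
    simp only [Set.mem_iUnion]
    refine ⟨c, Finset.mem_filter.2 ⟨hcs, hc0⟩, ?_⟩
    change T / 2 < |_|
    refine lt_of_lt_of_le ?_ (le_abs_self _)
    rw [ipr_eq_inner, WithLp.toLp_ofLp, inner_smul_right, key]
    rw [inv_mul_eq_div, lt_div_iff₀ hcn]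
    have := hs2 c hcs
    nlinarith
  calc _ ≤ P (⋃ c ∈ s.filter (fun c => c ≠ 0), {ω | T / 2 < |ipr (W ω) ((‖c‖)⁻¹ • (c : EuclideanSpace ℝ N)).ofLp|}) := measure_mono hsub
    _ ≤ ∑ c ∈ s.filter (fun c => c ≠ 0), P {ω | T / 2 < |ipr (W ω) ((‖c‖)⁻¹ • (c : EuclideanSpace ℝ N)).ofLp|} :=
        measure_biUnion_finset_le _ _
    _ ≤ ∑ c ∈ s.filter (fun c => c ≠ 0), ENNReal.ofReal (Real.exp (-ρ * T ^ 2 / 8)) := by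
        refine Finset.sum_le_sum fun c hc => ?_
        have hc0 := (Finset.mem_filter.1 hc).2
        have hcn : 0 < ‖c‖ := norm_pos_iff.2 hc0
        have := hW ((‖c‖)⁻¹ • (c : EuclideanSpace ℝ N)).ofLp (by
          rw [enr_eq_norm, WithLp.toLp_ofLp, norm_smul, norm_inv, norm_norm]
          exact inv_mul_cancel₀ hcn.ne') (T / 2) (by positivity)
        refine this.trans (le_of_eq ?_)
        congr 2; ring
    _ ≤ _ := by
        rw [Finset.sum_const, nsmul_eq_mul]
        gcongr
        exact (Finset.card_filter_le _ _).trans hcard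

end net

lemma integral_le_of_bad {Ω : Type*} [MeasurableSpace Ω] (P : Measure Ω) [IsProbabilityMeasure P]
    (f : Ω → ℝ) (B : Set Ω) (ε₁ ε₂ : ℝ) (h1 : 0 ≤ ε₁) (h2 : 0 ≤ ε₂)
    (hB : P B ≤ ENNReal.ofReal ε₁) (hf1 : ∀ ω, f ω ≤ 1) (hf : ∀ ω, ω ∉ B → f ω ≤ ε₂) :
    ∫ ω, f ω ∂P ≤ ε₁ + ε₂ := by
  by_cases hi : Integrable f P
  · have hm : MeasurableSet (toMeasurable P B) := measurableSet_toMeasurable P B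
    have hg : Integrable ((toMeasurable P B).indicator (fun _ => (1:ℝ))) P :=
      (integrable_const 1).indicator hm
    have : ∫ ω, f ω ∂P ≤ ∫ ω, ((toMeasurable P B).indicator (fun _ => (1:ℝ)) ω + ε₂) ∂P := by
      refine integral_mono hi (hg.add (integrable_const _)) fun ω => ?_
      by_cases hω : ω ∈ toMeasurable P B
      · have := hf1 ω
        simp only [Set.indicator_of_mem hω]
        linarith
      · have := hf ω (fun h => hω (subset_toMeasurable P B h))
        simp only [Set.indicator_of_notMem hω]
        linarith
    refine this.trans ?_
    rw [integral_add hg (integrable_const _), integral_indicator_const _ hm]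
    simp only [smul_eq_mul, mul_one, integral_const, probReal_univ, one_mul]
    gcongr
    rw [Measure.real, measure_toMeasurable]
    exact ENNReal.toReal_le_of_le_ofReal h1 hB
  · rw [integral_undef hi]; positivity

section assembly

/-- complexity score -/
noncomputable def sc (n m k l : ℕ) : ℝ := (k : ℝ) * (l : ℝ) + (n : ℝ) * Real.log k + (m : ℝ) * Real.log l

/-- model index -/
abbrev Idx (n m : ℕ) := Σ kl : Fin n × Fin m,
        ((Fin n → Fin ((kl.1 : ℕ) + 1)) × (Fin m → Fin ((kl.2 : ℕ) + 1)))

/-- joint labels -/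
def zz {n m : ℕ} (i : Idx n m) (p : Fin n × Fin m) : Fin ((i.1.1 : ℕ) + 1) × Fin ((i.1.2 : ℕ) + 1) :=
  (i.2.1 p.1, i.2.2 p.2)

/-- model score -/
noncomputable def isc {n m : ℕ} (ab : Fin n × Fin m) : ℝ := sc n m ((ab.1 : ℕ) + 1) ((ab.2 : ℕ) + 1)

/-- number of labellings -/
noncomputable def nz {n m : ℕ} (ab : Fin n × Fin m) : ℝ :=
  (((ab.1 : ℕ) + 1 : ℕ) : ℝ) ^ n * (((ab.2 : ℕ) + 1 : ℕ) : ℝ) ^ m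

/-- normalised model integral -/
noncomputable def Jz {N κ : Type*} [Fintype N] [Fintype κ] (z : N → κ) (lam : ℝ) (Y : N → ℝ)
    (S : Set (κ → ℝ)) : ℝ :=
  Real.sqrt (∏ q, cnt z q) * (lam / Real.sqrt π) ^ Fintype.card κ * ∫ Q in S, Fz z lam Y Q

lemma bicPost_eq (n m : ℕ) (D lam : ℝ) (Y : Fin n × Fin m → ℝ)
    (K : Set (ℕ × ℕ)) (U : Set (Fin n → Fin m → ℝ)) :
    bicPost n m D lam Y K U =
      (∑ i : Idx n m, (if (((i.1.1 : ℕ) + 1), ((i.1.2 : ℕ) + 1)) ∈ K then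
          Real.exp (-D * isc i.1) * (nz i.1)⁻¹ else 0) *
        Jz (zz i) lam Y {Q | (fun a b => Q (i.2.1 a, i.2.2 b)) ∈ U}) /
      (∑ i : Idx n m, (Real.exp (-D * isc i.1) * (nz i.1)⁻¹) * Jz (zz i) lam Y Set.univ) := by
  have hF : ∀ (i : Idx n m) (Q : Fin ((i.1.1 : ℕ) + 1) × Fin ((i.1.2 : ℕ) + 1) → ℝ),
      Real.exp (-(1/2) * (enr fun t => Y t -
        (bicX n m ((i.1.1 : ℕ) + 1) ((i.1.2 : ℕ) + 1) i.2.1 i.2.2).mulVec Q t) ^ 2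
          - lam * enr ((bicX n m ((i.1.1 : ℕ) + 1) ((i.1.2 : ℕ) + 1) i.2.1 i.2.2).mulVec Q))
      = Fz (zz i) lam Y Q := by
    intro i Q
    have : (bicX n m ((i.1.1 : ℕ) + 1) ((i.1.2 : ℕ) + 1) i.2.1 i.2.2).mulVec Q
      = fun p => Q (i.2.1 p.1, i.2.2 p.2) := funext fun p => mulVec_bicX _ _ _ _ _ _ _ _
    simp only [this, Fz, zz]
  unfold bicPost gpostP
  simp only [hF, gramDet_bicX]
  congr 1
  · refine Finset.sum_congr rfl fun i _ => ?_
    rw [mul_assoc, mul_assoc, Jz, mul_assoc (Real.sqrt _)]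
    rfl
  · refine Finset.sum_congr rfl fun i _ => ?_
    rw [mul_assoc, mul_assoc, Jz, mul_assoc (Real.sqrt _), setIntegral_univ]
    rfl

lemma Jz_cases {N κ : Type*} [Fintype N] [Fintype κ] (z : N → κ) :
    (∀ q, 0 < cnt z q) ∨ (∀ lam Y S, Jz z lam Y S = 0) := by
  by_cases h : ∀ q, 0 < cnt z q
  · exact Or.inl h
  · right
    push Not at h
    obtain ⟨q, hq⟩ := h
    have h0 : cnt z q = 0 := le_antisymm hq (by unfold cnt; positivity)
    intro lam Y S
    rw [Jz, Finset.prod_eq_zero (Finset.mem_univ q) h0]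
    simp

lemma Fz_nonneg {N κ : Type*} [Fintype N] [Fintype κ] (z : N → κ) (lam : ℝ) (Y : N → ℝ) (Q : κ → ℝ) :
    0 ≤ Fz z lam Y Q := (Real.exp_pos _).le

lemma Jz_nonneg {N κ : Type*} [Fintype N] [Fintype κ] (z : N → κ) (lam : ℝ) (hlam : 0 < lam) (Y : N → ℝ)
    (S : Set (κ → ℝ)) : 0 ≤ Jz z lam Y S := by
  unfold Jz
  have : 0 ≤ ∫ Q in S, Fz z lam Y Q := integral_nonneg fun Q => Fz_nonneg _ _ _ _
  positivity

lemma Jz_mono {N κ : Type*} [Fintype N] [Fintype κ] (z : N → κ) (lam : ℝ) (hlam : 0 < lam) (Y : N → ℝ)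
    (S : Set (κ → ℝ)) : Jz z lam Y S ≤ Jz z lam Y Set.univ := by
  rcases Jz_cases z with h | h
  · unfold Jz
    apply mul_le_mul_of_nonneg_left _ (by positivity)
    rw [setIntegral_univ]
    exact setIntegral_le_integral (Fz_integrable z lam hlam Y h)
      (Filter.Eventually.of_forall fun Q => Fz_nonneg _ _ _ _)
  · rw [h, h]

lemma nz_pos {n m : ℕ} (ab : Fin n × Fin m) : 0 < nz ab := by
  unfold nz; positivity

lemma wt_pos {n m : ℕ} (D : ℝ) (ab : Fin n × Fin m) : 0 < Real.exp (-D * isc ab) * (nz ab)⁻¹ :=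
  mul_pos (Real.exp_pos _) (inv_pos.2 (nz_pos ab))

lemma bicPost_le_one (n m : ℕ) (D lam : ℝ) (hlam : 0 < lam) (Y : Fin n × Fin m → ℝ)
    (K : Set (ℕ × ℕ)) (U : Set (Fin n → Fin m → ℝ)) : bicPost n m D lam Y K U ≤ 1 := by
  rw [bicPost_eq]
  apply div_le_one_of_le₀
  · refine Finset.sum_le_sum fun i _ => ?_
    refine mul_le_mul ?_ (Jz_mono _ _ hlam _ _) (Jz_nonneg _ _ hlam _ _) (wt_pos D i.1).le
    split_ifs
    · exact le_rfl
    · exact (wt_pos D i.1).le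
  · exact Finset.sum_nonneg fun i _ => mul_nonneg (wt_pos D i.1).le (Jz_nonneg _ _ hlam _ _)

lemma sum_idx {n m : ℕ} (g : Fin n × Fin m → ℝ) :
    ∑ i : Idx n m, g i.1 * (nz i.1)⁻¹ = ∑ ab, g ab := by
  rw [Fintype.sum_sigma]
  refine Finset.sum_congr rfl fun ab _ => ?_
  simp only
  rw [Finset.sum_const, nsmul_eq_mul, Finset.card_univ, Fintype.card_prod, Fintype.card_fun,
    Fintype.card_fun]
  simp only [Fintype.card_fin]
  have := (nz_pos ab).ne'
  rw [mul_comm (g ab), ← mul_assoc]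
  have h : (((((ab.1 : ℕ) + 1) ^ n * ((ab.2 : ℕ) + 1) ^ m : ℕ)) : ℝ) = nz ab := by
    unfold nz; push_cast; ring
  rw [h, mul_inv_cancel₀ this, one_mul]

lemma logterms_nonneg (n m k l : ℕ) : 0 ≤ (n : ℝ) * Real.log k + (m : ℝ) * Real.log l := by
  have h1 := Real.log_natCast_nonneg k
  have h2 := Real.log_natCast_nonneg l
  positivity

lemma kl_le_isc {n m : ℕ} (ab : Fin n × Fin m) :
    ((((ab.1 : ℕ) + 1 : ℕ) : ℝ) * (((ab.2 : ℕ) + 1 : ℕ) : ℝ)) ≤ isc ab := by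
  have := logterms_nonneg n m ((ab.1 : ℕ) + 1) ((ab.2 : ℕ) + 1)
  unfold isc sc
  linarith

lemma one_le_isc {n m : ℕ} (ab : Fin n × Fin m) : 1 ≤ isc ab := by
  refine le_trans ?_ (kl_le_isc ab)
  push_cast
  have h1 : (0:ℝ) ≤ (ab.1 : ℕ) := Nat.cast_nonneg _
  have h2 : (0:ℝ) ≤ (ab.2 : ℕ) := Nat.cast_nonneg _
  nlinarith

lemma nz_le {n m : ℕ} (ab : Fin n × Fin m) : nz ab ≤ Real.exp (isc ab) := by
  have h : nz ab = Real.exp ((n : ℝ) * Real.log (((ab.1 : ℕ) + 1 : ℕ)) + (m : ℝ) * Real.log (((ab.2 : ℕ) + 1 : ℕ))) := by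
    rw [Real.exp_add, Real.exp_nat_mul, Real.exp_nat_mul, Real.exp_log (by positivity),
      Real.exp_log (by positivity), nz]
  rw [h]
  apply Real.exp_le_exp.2
  unfold isc sc
  have : (0:ℝ) ≤ (((ab.1 : ℕ) + 1 : ℕ) : ℝ) * (((ab.2 : ℕ) + 1 : ℕ) : ℝ) := by positivity
  linarith

lemma card_le_isc {n m : ℕ} (i : Idx n m) :
    (Fintype.card (Fin ((i.1.1 : ℕ) + 1) × Fin ((i.1.2 : ℕ) + 1)) : ℝ) ≤ isc i.1 := by
  have := kl_le_isc i.1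
  simpa using this

lemma geom_fin (n : ℕ) : ∑ a : Fin n, (1/2 : ℝ) ^ ((a : ℕ) + 1) ≤ 1 := by
  rw [Fin.sum_univ_eq_sum_range (fun a => (1/2 : ℝ) ^ (a + 1))]
  have : ∀ n : ℕ, ∑ a ∈ Finset.range n, (1/2 : ℝ) ^ (a + 1) = 1 - (1/2) ^ n := by
    intro n
    induction n with
    | zero => simp
    | succ k ih => rw [Finset.sum_range_succ, ih]; ring
  rw [this]
  have : (0:ℝ) ≤ (1/2) ^ n := by positivity
  linarith

lemma sum_exp_isc (n m : ℕ) : ∑ ab : Fin n × Fin m, Real.exp (-2 * isc ab) ≤ 1 := by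
  have hb : ∀ k : ℕ, Real.exp (-(k : ℝ)) ≤ (1/2 : ℝ) ^ k := by
    intro k
    have : Real.exp (-(k:ℝ)) = (Real.exp (-1)) ^ k := by
      rw [← Real.exp_nat_mul]; congr 1; ring
    rw [this]
    apply pow_le_pow_left₀ (Real.exp_pos _).le
    rw [Real.exp_neg, one_div]
    apply inv_anti₀ (by norm_num)
    have := Real.add_one_le_exp (1:ℝ)
    linarith
  calc _ ≤ ∑ ab : Fin n × Fin m, (1/2 : ℝ) ^ ((ab.1 : ℕ) + 1) * (1/2 : ℝ) ^ ((ab.2 : ℕ) + 1) := by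
        refine Finset.sum_le_sum fun ab _ => ?_
        refine le_trans ?_ (mul_le_mul (hb _) (hb _) (Real.exp_pos _).le (by positivity))
        rw [← Real.exp_add]
        apply Real.exp_le_exp.2
        have := kl_le_isc ab
        push_cast at *
        have h1 : (0:ℝ) ≤ (ab.1 : ℕ) := Nat.cast_nonneg _
        have h2 : (0:ℝ) ≤ (ab.2 : ℕ) := Nat.cast_nonneg _
        nlinarith
    _ = (∑ a : Fin n, (1/2 : ℝ) ^ ((a : ℕ) + 1)) * ∑ b : Fin m, (1/2 : ℝ) ^ ((b : ℕ) + 1) := by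
        rw [Finset.sum_mul_sum, Fintype.sum_prod_type]
    _ ≤ 1 := mul_le_one₀ (geom_fin n) (Finset.sum_nonneg fun _ _ => by positivity) (geom_fin m)

lemma surj_reduce (n k : ℕ) (hn : 1 ≤ n) (f : Fin n → Fin k) :
    ∃ a : Fin n, ∃ g : Fin n → Fin ((a : ℕ) + 1), Function.Surjective g ∧ (a : ℕ) + 1 ≤ k ∧
      ∃ h : Fin ((a : ℕ) + 1) → Fin k, ∀ i, h (g i) = f i := by
  set s := Finset.univ.image f with hs
  have h1 : 1 ≤ s.card := Finset.card_pos.2 ⟨f ⟨0, hn⟩, Finset.mem_image_of_mem _ (Finset.mem_univ _)⟩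
  have h2 : s.card ≤ n := by simpa using Finset.card_image_le (s := Finset.univ) (f := f)
  have h3 : s.card ≤ k := by simpa using Finset.card_le_univ s
  obtain ⟨a, ha⟩ : ∃ a, s.card = a + 1 := ⟨s.card - 1, by omega⟩
  let e : s ≃ Fin (a + 1) := s.equivFinOfCardEq ha
  refine ⟨⟨a, by omega⟩, fun i => e ⟨f i, Finset.mem_image_of_mem _ (Finset.mem_univ _)⟩, ?_, by
    simpa [← ha] using h3, fun x => (e.symm x : Fin k), fun i => by simp⟩
  intro x
  obtain ⟨i, -, hi⟩ := Finset.mem_image.1 (e.symm x).2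
  refine ⟨i, ?_⟩
  have : (⟨f i, Finset.mem_image_of_mem _ (Finset.mem_univ _)⟩ : s) = e.symm x := Subtype.ext hi
  exact (congrArg e this).trans (e.apply_symm_apply x)

lemma cnt_pos_of_surj {n m : ℕ} (i : Idx n m) (h1 : Function.Surjective i.2.1)
    (h2 : Function.Surjective i.2.2) : ∀ q, 0 < cnt (zz i) q := by
  rintro ⟨x, y⟩
  obtain ⟨p1, rfl⟩ := h1 x
  obtain ⟨p2, rfl⟩ := h2 y
  unfold cnt
  rw [Nat.cast_pos]
  exact Finset.card_pos.2 ⟨(p1, p2), by simp [zz]⟩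

end assembly

section final

/-- radius -/
noncomputable def Tr {n m : ℕ} (K s : ℝ) (ab : Fin n × Fin m) : ℝ := Real.sqrt (K * (isc ab + s))

/-- the good event -/
def Good {n m : ℕ} (K s : ℝ) (θ W : Fin n × Fin m → ℝ) : Prop :=
  ∀ (i : Idx n m) (Q : Fin ((i.1.1 : ℕ) + 1) × Fin ((i.1.2 : ℕ) + 1) → ℝ),
    ipr W (fun t => Q (zz i t) - θ t) ≤ Tr K s i.1 * enr (fun t => Q (zz i t) - θ t)

lemma bad_prob {n m : ℕ} {Ω : Type} [MeasurableSpace Ω] (P : Measure Ω) (ρ : ℝ) (hρ : 0 < ρ)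
    (W : Ω → Fin n × Fin m → ℝ) (hW : subG P ρ W) (θ : Fin n × Fin m → ℝ) (s : ℝ) (hs : 1 ≤ s) :
    P {ω | ¬ Good (56 / ρ) s θ (W ω)} ≤ ENNReal.ofReal (Real.exp (-2 * s)) := by
  let Lm : (i : Idx n m) → (((Fin ((i.1.1 : ℕ) + 1) × Fin ((i.1.2 : ℕ) + 1) → ℝ) × ℝ) →ₗ[ℝ]
      EuclideanSpace ℝ (Fin n × Fin m)) := fun i =>
    { toFun := fun x => WithLp.toLp 2 (fun t => x.1 (zz i t) + x.2 * θ t)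
      map_add' := by
        intro x y
        ext t
        simp
        ring
      map_smul' := by
        intro r x
        ext t
        simp
        ring }
  have hTpos : ∀ ab : Fin n × Fin m, 0 < Tr (56 / ρ) s ab := fun ab => by
    have := one_le_isc ab
    unfold Tr
    apply Real.sqrt_pos.2
    positivity
  have hsub : {ω | ¬ Good (56 / ρ) s θ (W ω)} ⊆ ⋃ i : Idx n m,
      {ω | ∃ u : Fin n × Fin m → ℝ, WithLp.toLp 2 u ∈ LinearMap.range (Lm i) ∧
        Tr (56 / ρ) s i.1 * enr u < ipr (W ω) u} := by
    intro ω hω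
    simp only [Good, Set.mem_ofPred_eq, not_forall, not_le] at hω
    obtain ⟨i, Q, hQ⟩ := hω
    refine Set.mem_iUnion.2 ⟨i, ?_⟩
    refine ⟨_, ⟨(Q, -1), ?_⟩, hQ⟩
    ext t
    simp [Lm, sub_eq_add_neg]
  have hdim : ∀ i : Idx n m, (Module.finrank ℝ (LinearMap.range (Lm i)) : ℝ) ≤ isc i.1 + 1 := by
    intro i
    have h1 := LinearMap.finrank_range_le (Lm i)
    have h2 : Module.finrank ℝ ((Fin ((i.1.1 : ℕ) + 1) × Fin ((i.1.2 : ℕ) + 1) → ℝ) × ℝ)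
        = Fintype.card (Fin ((i.1.1 : ℕ) + 1) × Fin ((i.1.2 : ℕ) + 1)) + 1 := by
      rw [Module.finrank_prod, Module.finrank_fintype_fun_eq_card, Module.finrank_self]
    rw [h2] at h1
    have h3 : (Module.finrank ℝ (LinearMap.range (Lm i)) : ℝ) ≤
      (Fintype.card (Fin ((i.1.1 : ℕ) + 1) × Fin ((i.1.2 : ℕ) + 1)) : ℝ) + 1 := by exact_mod_cast h1
    have := card_le_isc i
    linarith
  calc _ ≤ P (⋃ i : Idx n m,
      {ω | ∃ u : Fin n × Fin m → ℝ, WithLp.toLp 2 u ∈ LinearMap.range (Lm i) ∧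
        Tr (56 / ρ) s i.1 * enr u < ipr (W ω) u}) := measure_mono hsub
    _ ≤ ∑ i : Idx n m, P {ω | ∃ u : Fin n × Fin m → ℝ, WithLp.toLp 2 u ∈ LinearMap.range (Lm i) ∧
        Tr (56 / ρ) s i.1 * enr u < ipr (W ω) u} := measure_iUnion_fintype_le _ _
    _ ≤ ∑ i : Idx n m, ENNReal.ofReal (Real.exp (-2 * isc i.1 - 2 * s) * (nz i.1)⁻¹) := by
        refine Finset.sum_le_sum fun i _ => ?_
        refine (subspace_tail P ρ W hW _ _ (hTpos i.1)).trans ?_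
        rw [← ENNReal.ofReal_natCast, ← ENNReal.ofReal_mul (by positivity)]
        apply ENNReal.ofReal_le_ofReal
        have hT2 : Tr (56 / ρ) s i.1 ^ 2 = 56 / ρ * (isc i.1 + s) := by
          have := one_le_isc i.1
          unfold Tr
          exact Real.sq_sqrt (by positivity)
        rw [hT2, ← div_eq_mul_inv, le_div_iff₀ (nz_pos i.1)]
        have h5 : (((5 ^ Module.finrank ℝ (LinearMap.range (Lm i)) : ℕ)) : ℝ) ≤
            Real.exp (2 * (isc i.1 + 1)) := by
          push_cast
          have : (5 : ℝ) ≤ Real.exp 2 := by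
            have h := Real.quadratic_le_exp_of_nonneg (x := 2) (by norm_num)
            linarith
          calc (5:ℝ) ^ _ ≤ (Real.exp 2) ^ (Module.finrank ℝ (LinearMap.range (Lm i))) :=
                pow_le_pow_left₀ (by norm_num) this _
            _ = Real.exp (Module.finrank ℝ (LinearMap.range (Lm i)) * 2) := (Real.exp_nat_mul _ _).symm
            _ ≤ _ := by
              apply Real.exp_le_exp.2
              have := hdim i
              linarith
        have h6 : -ρ * (56 / ρ * (isc i.1 + s)) / 8 = -7 * (isc i.1 + s) := by
          field_simp; ring
        rw [h6]
        calc _ ≤ Real.exp (2 * (isc i.1 + 1)) * Real.exp (-7 * (isc i.1 + s)) * Real.exp (isc i.1) := by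
              gcongr
              · exact (nz_pos i.1).le
              · exact nz_le i.1
          _ ≤ _ := by
              rw [← Real.exp_add, ← Real.exp_add]
              apply Real.exp_le_exp.2
              have := one_le_isc i.1
              linarith
    _ = ENNReal.ofReal (∑ i : Idx n m, Real.exp (-2 * isc i.1 - 2 * s) * (nz i.1)⁻¹) := by
        rw [ENNReal.ofReal_sum_of_nonneg]
        intro i _
        have := nz_pos i.1
        positivity
    _ ≤ _ := by
        apply ENNReal.ofReal_le_ofReal
        rw [sum_idx (fun ab : Fin n × Fin m => Real.exp (-2 * isc ab - 2 * s))]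
        have : ∀ ab : Fin n × Fin m, Real.exp (-2 * isc ab - 2 * s)
            = Real.exp (-2 * isc ab) * Real.exp (-2 * s) := fun ab => by
          rw [← Real.exp_add]; congr 1; ring
        simp_rw [this]
        rw [← Finset.sum_mul]
        have h1 := sum_exp_isc n m
        have h2 := (Real.exp_pos (-2 * s)).le
        nlinarith

set_option maxHeartbeats 1000000 in
lemma post_bound {n m : ℕ} (D lam K s R : ℝ) (hD : 0 ≤ D) (hlam : 0 < lam) (hK : 0 ≤ K) (hs : 1 ≤ s)
    (θ W : Fin n × Fin m → ℝ) (hG : Good K s θ W)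
    (i' : Idx n m) (hi' : ∀ q, 0 < cnt (zz i') q) (c : _ → ℝ) (hc : ∀ t, θ t = c (zz i' t))
    (hsc : isc i'.1 ≤ s)
    (Ks : Set (ℕ × ℕ)) (U : Set (Fin n → Fin m → ℝ)) (hU : MeasurableSet U)
    (hR : ∀ x ∈ U, R ≤ enr (fun t : Fin n × Fin m => x t.1 t.2 - θ t) ^ 2)
    (hcond : ∀ ab : Fin n × Fin m, (((ab.1 : ℕ) + 1), ((ab.2 : ℕ) + 1)) ∈ Ks →
      -D * isc ab + 2 * (K * (isc ab + s)) + 2 * lam ^ 2 + 3 * lam * isc ab - R / 8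
        + (D + 1) * s + s / lam + lam ^ 2 / 2 ≤ -2 * isc ab - 2 * s) :
    bicPost n m D lam (fun p => θ p + W p) Ks U ≤ Real.exp (-2 * s) := by
  rw [bicPost_eq]
  set G := Real.exp (-(1/2) * enr W ^ 2 - lam * enr θ) with hGdef
  have hGpos : 0 < G := Real.exp_pos _
  have hden : G * Real.exp (-((D + 1) * s + s / lam + lam ^ 2 / 2)) ≤
      ∑ i : Idx n m, (Real.exp (-D * isc i.1) * (nz i.1)⁻¹) * Jz (zz i) lam (fun p => θ p + W p) Set.univ := by
    refine le_trans ?_ (Finset.single_le_sum (f := fun i : Idx n m =>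
      (Real.exp (-D * isc i.1) * (nz i.1)⁻¹) * Jz (zz i) lam (fun p => θ p + W p) Set.univ)
      (fun i _ => mul_nonneg (wt_pos D i.1).le (Jz_nonneg _ _ hlam _ _)) (Finset.mem_univ i'))
    have h1 := term_lower (zz i') lam hlam θ W hi' c hc
    have h2 : Real.exp (-((D + 1) * s)) ≤ Real.exp (-D * isc i'.1) * (nz i'.1)⁻¹ := by
      rw [← div_eq_mul_inv, le_div_iff₀ (nz_pos _)]
      calc _ ≤ Real.exp (-((D + 1) * s)) * Real.exp (isc i'.1) := by
            gcongr; exact nz_le _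
        _ ≤ _ := by
            rw [← Real.exp_add]
            apply Real.exp_le_exp.2
            nlinarith
    rw [Jz, setIntegral_univ]
    calc G * Real.exp (-((D + 1) * s + s / lam + lam ^ 2 / 2))
        = Real.exp (-((D + 1) * s)) * (G * Real.exp (-(lam ^ 2 / 2) - s / lam)) := by
          rw [hGdef, ← Real.exp_add, ← Real.exp_add, ← Real.exp_add]; congr 1; ring
      _ ≤ (Real.exp (-D * isc i'.1) * (nz i'.1)⁻¹) * (G * Real.exp (-(lam ^ 2 / 2)
            - Fintype.card (Fin ((i'.1.1 : ℕ) + 1) × Fin ((i'.1.2 : ℕ) + 1)) / lam)) := by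
          have := (card_le_isc i').trans hsc
          refine mul_le_mul h2 ?_ (by positivity) (wt_pos D i'.1).le
          gcongr
      _ ≤ _ := mul_le_mul_of_nonneg_left h1 (wt_pos D i'.1).le
  have hnum : (∑ i : Idx n m, (if (((i.1.1 : ℕ) + 1), ((i.1.2 : ℕ) + 1)) ∈ Ks then
          Real.exp (-D * isc i.1) * (nz i.1)⁻¹ else 0) *
        Jz (zz i) lam (fun p => θ p + W p) {Q | (fun a b => Q (i.2.1 a, i.2.2 b)) ∈ U})
      ≤ G * Real.exp (-((D + 1) * s + s / lam + lam ^ 2 / 2)) * Real.exp (-2 * s) := by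
    calc _ ≤ ∑ i : Idx n m, (G * Real.exp (-((D + 1) * s + s / lam + lam ^ 2 / 2)) * Real.exp (-2 * s) *
            Real.exp (-2 * isc i.1)) * (nz i.1)⁻¹ := by
          refine Finset.sum_le_sum fun i _ => ?_
          have hnz := nz_pos i.1
          split_ifs with hi
          · rcases Jz_cases (zz i) with h | h
            · have hT2 : Tr K s i.1 ^ 2 = K * (isc i.1 + s) := by
                have := one_le_isc i.1
                unfold Tr
                exact Real.sq_sqrt (by positivity)
              have hmeas : MeasurableSet {Q : Fin ((i.1.1 : ℕ) + 1) × Fin ((i.1.2 : ℕ) + 1) → ℝ |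
                  (fun a b => Q (i.2.1 a, i.2.2 b)) ∈ U} := by
                have : Measurable (fun (Q : Fin ((i.1.1 : ℕ) + 1) × Fin ((i.1.2 : ℕ) + 1) → ℝ) =>
                  (fun a b => Q (i.2.1 a, i.2.2 b))) := by fun_prop
                exact this hU
              have hR' : ∀ Q ∈ {Q : Fin ((i.1.1 : ℕ) + 1) × Fin ((i.1.2 : ℕ) + 1) → ℝ |
                  (fun a b => Q (i.2.1 a, i.2.2 b)) ∈ U},
                  R ≤ enr (fun t => Q (zz i t) - θ t) ^ 2 := by
                intro Q hQ
                exact hR (fun a b => Q (i.2.1 a, i.2.2 b)) hQ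
              have h1 := term_upper (zz i) lam hlam θ W h (Tr K s i.1) R _ hmeas (hG i) hR'
              rw [hT2] at h1
              have h2 := mul_le_mul_of_nonneg_left h1 (wt_pos D i.1).le
              refine h2.trans ?_
              rw [mul_right_comm]
              apply mul_le_mul_of_nonneg_right _ (inv_pos.2 hnz).le
              rw [← hGdef, mul_left_comm, mul_assoc G, mul_assoc G]
              apply mul_le_mul_of_nonneg_left _ hGpos.le
              rw [← Real.exp_add, ← Real.exp_add, ← Real.exp_add]
              apply Real.exp_le_exp.2
              have h3 := hcond i.1 hi
              have h4 := mul_le_mul_of_nonneg_left (card_le_isc i) (by positivity : 0 ≤ 3 * lam)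
              linarith
            · rw [h, mul_zero]
              positivity
          · rw [zero_mul]
            positivity
      _ = G * Real.exp (-((D + 1) * s + s / lam + lam ^ 2 / 2)) * Real.exp (-2 * s) *
            ∑ ab : Fin n × Fin m, Real.exp (-2 * isc ab) := by
          rw [sum_idx (fun ab : Fin n × Fin m => G * Real.exp (-((D + 1) * s + s / lam + lam ^ 2 / 2)) * Real.exp (-2 * s) *
            Real.exp (-2 * isc ab)), Finset.mul_sum]
      _ ≤ _ := mul_le_of_le_one_right (by positivity) (sum_exp_isc n m)
  have hdp : 0 < G * Real.exp (-((D + 1) * s + s / lam + lam ^ 2 / 2)) := by positivity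
  rw [div_le_iff₀ (hdp.trans_le hden)]
  refine hnum.trans ?_
  rw [mul_comm]
  exact mul_le_mul_of_nonneg_left hden (Real.exp_pos _).le

lemma two_exp (s : ℝ) (hs : 1 ≤ s) : Real.exp (-2 * s) + Real.exp (-2 * s) ≤ Real.exp (-1 * s) := by
  have h1 : Real.exp (-1 * s) = Real.exp (-2 * s) * Real.exp s := by
    rw [← Real.exp_add]; congr 1; ring
  rw [h1]
  have := Real.add_one_le_exp s
  nlinarith [Real.exp_pos (-2 * s)]

lemma exists_model {n m ks ls : ℕ} (hn : 1 ≤ n) (hm : 1 ≤ m) (Qs : Fin ks → Fin ls → ℝ) (z₁s : Fin n → Fin ks)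
    (z₂s : Fin m → Fin ls) :
    ∃ i' : Idx n m, (∀ q, 0 < cnt (zz i') q) ∧ isc i'.1 ≤ sc n m ks ls ∧
      ∃ c : Fin ((i'.1.1 : ℕ) + 1) × Fin ((i'.1.2 : ℕ) + 1) → ℝ,
        ∀ t : Fin n × Fin m, Qs (z₁s t.1) (z₂s t.2) = c (zz i' t) := by
  obtain ⟨a, g1, hg1, ha, h1, hh1⟩ := surj_reduce n ks hn z₁s
  obtain ⟨b, g2, hg2, hb, h2, hh2⟩ := surj_reduce m ls hm z₂s
  refine ⟨⟨(a, b), (g1, g2)⟩, cnt_pos_of_surj _ hg1 hg2, ?_, fun q => Qs (h1 q.1) (h2 q.2), fun t => ?_⟩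
  · unfold isc sc
    simp only
    have e1 : ((((a : ℕ) + 1 : ℕ)) : ℝ) ≤ ks := by exact_mod_cast ha
    have e2 : ((((b : ℕ) + 1 : ℕ)) : ℝ) ≤ ls := by exact_mod_cast hb
    have p1 : (0:ℝ) < (((a : ℕ) + 1 : ℕ)) := by positivity
    have p2 : (0:ℝ) < (((b : ℕ) + 1 : ℕ)) := by positivity
    have l1 := Real.log_le_log p1 e1
    have l2 := Real.log_le_log p2 e2
    gcongr
  · simp [zz, hh1, hh2]

end final

end BC

/-- Corollary 3 (posterior contraction for biclustering): the posterior contracts at the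
minimax rate `k*l* + n log k* + m log l*`. -/
theorem biclustering_contraction :
    ∀ lam ρ : ℝ, 0 < lam → 0 < ρ →
    ∃ δ₀ : ℝ, 0 < δ₀ ∧ δ₀ ≤ 1 ∧ ∀ δ : ℝ, 0 < δ → δ < δ₀ →
    ∃ D₀ : ℝ, 0 < D₀ ∧ ∀ D : ℝ, D₀ < D →
    ∃ M C' C'' : ℝ, 0 < M ∧ 0 < C' ∧ 0 < C'' ∧
    ∀ (n m ks ls : ℕ), 1 ≤ ks → ks ≤ n → 1 ≤ ls → ls ≤ m →
    ∀ (Qs : Fin ks → Fin ls → ℝ) (z₁s : Fin n → Fin ks) (z₂s : Fin m → Fin ls)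
      (θs : Fin n → Fin m → ℝ), (∀ i j, θs i j = Qs (z₁s i) (z₂s j)) →
    ∀ (Ω : Type) (_ : MeasurableSpace Ω) (P : Measure Ω) (_ : IsProbabilityMeasure P)
      (W : Ω → Fin n × Fin m → ℝ), subG P ρ W →
    (∫ ω, bicPost n m D lam (fun p => θs p.1 p.2 + W ω p)
          {kl : ℕ × ℕ |
            (1 + δ) * ((ks : ℝ) * (ls : ℝ) + (n : ℝ) * Real.log ks
                + (m : ℝ) * Real.log ls)
              < (kl.1 : ℝ) * (kl.2 : ℝ) + (n : ℝ) * Real.log kl.1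
                + (m : ℝ) * Real.log kl.2} Set.univ ∂P
        ≤ Real.exp (-C' * ((ks : ℝ) * (ls : ℝ) + (n : ℝ) * Real.log ks
            + (m : ℝ) * Real.log ls))) ∧
    (∫ ω, bicPost n m D lam (fun p => θs p.1 p.2 + W ω p) Set.univ
          {θ : Fin n → Fin m → ℝ |
            M * ((ks : ℝ) * (ls : ℝ) + (n : ℝ) * Real.log ks + (m : ℝ) * Real.log ls)
              < ∑ i, ∑ j, (θ i j - θs i j) ^ 2} ∂P
        ≤ Real.exp (-C'' * ((ks : ℝ) * (ls : ℝ) + (n : ℝ) * Real.log ks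
            + (m : ℝ) * Real.log ls))) := by
  intro lam ρ hlam hρ
  refine ⟨1, one_pos, le_rfl, fun δ hδ hδ1 => ?_⟩
  set K : ℝ := 56 / ρ with hKdef
  have hK : 0 < K := by positivity
  set B : ℝ := 4 * K + 3 * lam + 5 / 2 * lam ^ 2 + 1 + 1 / lam with hB
  have hBpos : 0 < B := by positivity
  refine ⟨2 * (B + 4) / δ, by positivity, fun D hD => ?_⟩
  have hDδ : 2 * (B + 4) < D * δ := by rwa [div_lt_iff₀ hδ] at hD
  have hDpos : 0 < D := lt_trans (by positivity) hD
  have hDB : B + 2 ≤ D := by nlinarith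
  refine ⟨8 * (D + B + 2), 1, 1, by positivity, one_pos, one_pos, ?_⟩
  intro n m ks ls hks hksn hls hlsm Qs z₁s z₂s θs hθ Ω _ P _ W hW
  change (_ ≤ Real.exp (-1 * BC.sc n m ks ls)) ∧ (_ ≤ Real.exp (-1 * BC.sc n m ks ls))
  obtain ⟨i', hi', hsc, c, hc⟩ := BC.exists_model (hks.trans hksn) (hls.trans hlsm) Qs z₁s z₂s
  have hs : 1 ≤ BC.sc n m ks ls := (BC.one_le_isc i'.1).trans hsc
  set s := BC.sc n m ks ls with hsdef
  have hc' : ∀ t : Fin n × Fin m, θs t.1 t.2 = c (BC.zz i' t) := fun t => by rw [hθ]; exact hc t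
  have hbad := BC.bad_prob P ρ hρ W hW (fun p => θs p.1 p.2) s hs
  have hsl : s / lam = (1 / lam) * s := by ring
  have hl0 : 0 < 1 / lam := by positivity
  constructor
  · refine le_trans (BC.integral_le_of_bad P _ _ (Real.exp (-2 * s)) (Real.exp (-2 * s))
      (Real.exp_pos _).le (Real.exp_pos _).le hbad
      (fun ω => BC.bicPost_le_one _ _ _ _ hlam _ _ _) ?_) (BC.two_exp s hs)
    intro ω hω
    have hgood : BC.Good K s (fun p : Fin n × Fin m => θs p.1 p.2) (W ω) := by
      by_contra h; exact hω h
    refine BC.post_bound D lam K s 0 hDpos.le hlam hK.le hs _ _ hgood i' hi' c hc' hsc _ _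
      MeasurableSet.univ (fun x _ => sq_nonneg _) ?_
    intro ab hab
    have hab' : (1 + δ) * s < BC.isc ab := hab
    set x := BC.isc ab with hx
    have h1 : s ≤ x := by nlinarith
    have h1x : 1 ≤ x := hs.trans h1
    have h2 : δ / 2 * x ≤ x - s := by nlinarith
    have h3 : (B + 4) * x ≤ D * (x - s) := by nlinarith
    have q1 := mul_le_mul_of_nonneg_left h1 hK.le
    have q2 := mul_le_mul_of_nonneg_left h1 hl0.le
    have q3 := mul_le_mul_of_nonneg_left h1x (sq_nonneg lam)
    rw [hsl]
    rw [hB] at h3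
    nlinarith
  · refine le_trans (BC.integral_le_of_bad P _ _ (Real.exp (-2 * s)) (Real.exp (-2 * s))
      (Real.exp_pos _).le (Real.exp_pos _).le hbad
      (fun ω => BC.bicPost_le_one _ _ _ _ hlam _ _ _) ?_) (BC.two_exp s hs)
    intro ω hω
    have hgood : BC.Good K s (fun p : Fin n × Fin m => θs p.1 p.2) (W ω) := by
      by_contra h; exact hω h
    refine BC.post_bound D lam K s (8 * (D + B + 2) * s) hDpos.le hlam hK.le hs _ _ hgood i' hi' c hc' hsc _ _
      ?_ ?_ ?_
    · apply measurableSet_lt measurable_const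
      fun_prop
    · intro x hx
      rw [BC.enr_sq, Fintype.sum_prod_type]
      exact le_of_lt hx
    · intro ab _
      have h1x := BC.one_le_isc ab
      set x := BC.isc ab with hx
      have q0 := mul_le_mul_of_nonneg_right hDB (by linarith : 0 ≤ x)
      have q3 := mul_le_mul_of_nonneg_left hs (sq_nonneg lam)
      have q4 : 0 ≤ K * x := by positivity
      have q5 : 0 ≤ K * s := by positivity
      have q6 : 0 ≤ lam ^ 2 * x := by positivity
      have q7 : 0 ≤ 1 / lam * x := by positivity
      have q8 : 0 ≤ lam * s := by positivity
      rw [hsl]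
      rw [hB] at *
      nlinarith
end
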